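/- arXiv:2110.14387 — 12 statements merged into one kernel-verified Lean document; each statement's English description precedes it below -/
import Mathlib

section
/- Let A be a unital C*-algebra whose set of tracial states T(A) is nonempty, let G be a discrete group, let α be an action of G on A, and suppose there is an integer M ≥ 1 such that every orbit of the induced action α* on T(A) is finite with at most M elements. Then for every a ∈ A one has ‖a‖_{2,T(A)^α} ≤ ‖a‖_{2,u} ≤ M^{1/2} · ‖a‖_{2,T(A)^α}; in particular the seminorms ‖·‖_{2,T(A)^α} and ‖·‖_{2,u} are equivalent. -/
open scoped ComplexOrder

/-- A tracial state on a unital C*-algebra `A`: a continuous linear functional `τ` with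
`τ 1 = 1`, `τ (a* a) ≥ 0` for all `a`, and `τ (a b) = τ (b a)` for all `a b`. -/
def IsTracialState {A : Type*} [NormedRing A] [StarRing A] [NormedAlgebra ℂ A]
    (τ : A →L[ℂ] ℂ) : Prop :=
  τ 1 = 1 ∧ (∀ a : A, 0 ≤ τ (star a * a)) ∧ ∀ a b : A, τ (a * b) = τ (b * a)

/-- The orbit `{τ ∘ α_g : g ∈ G}` of a functional `τ` under an action `α` of `G` on `A`. -/
def traceOrbit {A : Type*} [NormedRing A] [StarRing A] [NormedAlgebra ℂ A]
    {G : Type*} (α : G → A ≃⋆ₐ[ℂ] A) (τ : A →L[ℂ] ℂ) : Set (A →L[ℂ] ℂ) :=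
  {σ | ∃ g : G, ∀ a : A, σ a = τ (α g a)}

theorem aux_cont {A : Type*} [NormedRing A] [StarRing A] [CStarRing A]
    [NormedAlgebra ℂ A] [CompleteSpace A] [StarModule ℂ A] (φ : A ≃⋆ₐ[ℂ] A) :
    Continuous φ := by
  let _ : CStarAlgebra A := { }
  exact (NonUnitalStarAlgHom.isometry φ φ.injective).continuous

theorem aux_bound {A : Type*} [NormedRing A] [StarRing A] [CStarRing A]
    [NormedAlgebra ℂ A] [CompleteSpace A] [StarModule ℂ A] (τ : A →L[ℂ] ℂ)
    (hτ : IsTracialState τ) (a : A) : (τ (star a * a)).re ≤ ‖a‖ ^ 2 := by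
  let _ : CStarAlgebra A := { }
  let _ : PartialOrder A := CStarAlgebra.spectralOrder A
  have : StarOrderedRing A := CStarAlgebra.spectralOrderedRing A
  have h := CStarAlgebra.star_mul_le_algebraMap_norm_sq (a := a)
  rw [← sub_nonneg, CStarAlgebra.nonneg_iff_eq_star_mul_self] at h
  obtain ⟨b, hb⟩ := h
  have h2 := hτ.2.1 b
  rw [← hb, map_sub, Algebra.algebraMap_eq_smul_one] at h2
  have h3 : τ ((‖a‖ ^ 2 : ℝ) • (1 : A)) = ((‖a‖ ^ 2 : ℝ) : ℂ) := by
    rw [← Complex.coe_smul, map_smul, hτ.1]; simp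
  rw [h3] at h2
  have h4 := (Complex.le_def.1 h2).1
  rw [Complex.sub_re, Complex.ofReal_re, Complex.zero_re] at h4
  linarith

theorem aux_avg {A : Type*} [NormedRing A] [StarRing A] [CStarRing A]
    [NormedAlgebra ℂ A] [CompleteSpace A] [StarModule ℂ A]
    {G : Type*} [Group G]
    (α : G → A ≃⋆ₐ[ℂ] A)
    (hα1 : ∀ a : A, α 1 a = a)
    (hαmul : ∀ (g h : G) (a : A), α (g * h) a = α g (α h a))
    (M : ℕ) (τ : A →L[ℂ] ℂ) (hτ : IsTracialState τ)
    (hf : (traceOrbit α τ).Finite) (hc : (traceOrbit α τ).ncard ≤ M) :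
    ∃ σ : A →L[ℂ] ℂ, IsTracialState σ ∧ (∀ (g : G) (b : A), σ (α g b) = σ b) ∧
      ∀ a : A, (τ (star a * a)).re ≤ M * (σ (star a * a)).re := by
  classical
  obtain ⟨S, hS⟩ : ∃ S : Finset (A →L[ℂ] ℂ), ∀ σ, σ ∈ S ↔ ∃ g : G, ∀ a : A, σ a = τ (α g a) :=
    ⟨hf.toFinset, fun σ => by simp [traceOrbit]⟩
  have hcard : S.card ≤ M := by
    have : traceOrbit α τ = (S : Set (A →L[ℂ] ℂ)) := by
      ext σ; simp [traceOrbit, hS]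
    rwa [this, Set.ncard_coe_finset] at hc
  have hτS : τ ∈ S := (hS τ).2 ⟨1, fun a => by rw [hα1]⟩
  have hpos : 0 < S.card := Finset.card_pos.2 ⟨τ, hτS⟩
  have hne : (S.card : ℂ) ≠ 0 := by exact_mod_cast hpos.ne'
  have htr : ∀ σ ∈ S, IsTracialState σ := by
    intro σ hσ
    obtain ⟨g, hg⟩ := (hS σ).1 hσ
    refine ⟨?_, ?_, ?_⟩
    · rw [hg, map_one, hτ.1]
    · intro a
      rw [hg, map_mul, map_star]
      exact hτ.2.1 _
    · intro a b
      rw [hg, hg, map_mul (α g), map_mul (α g), hτ.2.2]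
  let c : G → A →L[ℂ] A := fun g =>
    { toFun := fun a => α g a
      map_add' := fun x y => map_add (α g) x y
      map_smul' := fun r x => map_smul (α g) r x
      cont := aux_cont (α g) }
  have hcg : ∀ g a, c g a = α g a := fun g a => rfl
  have hmem : ∀ g, ∀ σ ∈ S, σ.comp (c g) ∈ S := by
    intro g σ hσ
    obtain ⟨h, hh⟩ := (hS σ).1 hσ
    exact (hS _).2 ⟨h * g, fun a => by
      rw [ContinuousLinearMap.comp_apply, hcg, hh, hαmul]⟩
  have hinv : ∀ (g : G) (b : A), ∑ σ ∈ S, σ (α g b) = ∑ σ ∈ S, σ b := by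
    intro g b
    refine Finset.sum_nbij' (fun σ => σ.comp (c g)) (fun σ => σ.comp (c g⁻¹))
      (hmem g) (hmem g⁻¹) ?_ ?_ ?_
    · intro σ _
      ext a
      simp only [ContinuousLinearMap.comp_apply, hcg]
      rw [← hαmul, mul_inv_cancel, hα1]
    · intro σ _
      ext a
      simp only [ContinuousLinearMap.comp_apply, hcg]
      rw [← hαmul, inv_mul_cancel, hα1]
    · intro σ _
      simp only [ContinuousLinearMap.comp_apply, hcg]
  have happ : ∀ b, ((S.card : ℂ)⁻¹ • ∑ σ ∈ S, σ) b = (S.card : ℂ)⁻¹ * ∑ σ ∈ S, σ b := by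
    intro b
    simp
  have hT : IsTracialState ((S.card : ℂ)⁻¹ • ∑ σ ∈ S, σ) := by
    refine ⟨?_, ?_, ?_⟩
    · rw [happ, Finset.sum_congr rfl (fun σ hσ => (htr σ hσ).1)]
      simp [hne]
    · intro a
      rw [happ]
      refine mul_nonneg ?_ (Finset.sum_nonneg fun σ hσ => (htr σ hσ).2.1 a)
      rw [← Complex.ofReal_natCast, ← Complex.ofReal_inv]
      exact Complex.zero_le_real.2 (inv_nonneg.2 (Nat.cast_nonneg _))
    · intro a b
      rw [happ, happ, Finset.sum_congr rfl (fun σ hσ => (htr σ hσ).2.2 a b)]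
  refine ⟨_, hT, fun g b => by rw [happ, happ, hinv], fun a => ?_⟩
  have h0 : 0 ≤ (((S.card : ℂ)⁻¹ • ∑ σ ∈ S, σ) (star a * a)).re :=
    (Complex.le_def.1 (hT.2.1 a)).1
  have h1 : τ (star a * a) ≤ ∑ σ ∈ S, σ (star a * a) :=
    Finset.single_le_sum (f := fun σ : A →L[ℂ] ℂ => σ (star a * a))
      (fun σ hσ => (htr σ hσ).2.1 a) hτS
  have h2 : ∑ σ ∈ S, σ (star a * a)
      = ((S.card : ℝ) : ℂ) * ((S.card : ℂ)⁻¹ • ∑ σ ∈ S, σ) (star a * a) := by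
    rw [happ, Complex.ofReal_natCast, mul_inv_cancel_left₀ hne]
  rw [h2] at h1
  have h3 := (Complex.le_def.1 h1).1
  rw [Complex.re_ofReal_mul] at h3
  refine h3.trans (mul_le_mul_of_nonneg_right ?_ h0)
  exact_mod_cast hcard

/-- Let `A` be a unital C*-algebra with `T(A) ≠ ∅`, let `α` be an action
of a discrete group `G` on `A` by *-automorphisms whose induced action on `T(A)` has finite
orbits of cardinality at most `M ≥ 1`.  Then for every `a ∈ A`,
`‖a‖_{2,T(A)^α} ≤ ‖a‖_{2,u} ≤ √M ‖a‖_{2,T(A)^α}`, where `‖a‖_{2,T}` denotes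
`sup_{τ ∈ T} (τ (a* a))^{1/2}`. -/
theorem stmt0 {A : Type*} [NormedRing A] [StarRing A] [CStarRing A]
    [NormedAlgebra ℂ A] [CompleteSpace A] [StarModule ℂ A]
    {G : Type*} [Group G]
    (α : G → A ≃⋆ₐ[ℂ] A)
    (hα1 : ∀ a : A, α 1 a = a)
    (hαmul : ∀ (g h : G) (a : A), α (g * h) a = α g (α h a))
    (hTA : ∃ τ : A →L[ℂ] ℂ, IsTracialState τ)
    (M : ℕ) (hM : 1 ≤ M)
    (horb : ∀ τ : A →L[ℂ] ℂ, IsTracialState τ →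
      (traceOrbit α τ).Finite ∧ (traceOrbit α τ).ncard ≤ M) :
    ∀ a : A,
      sSup {r : ℝ | ∃ τ : A →L[ℂ] ℂ, IsTracialState τ ∧
          (∀ (g : G) (b : A), τ (α g b) = τ b) ∧ r = Real.sqrt (τ (star a * a)).re}
        ≤ sSup {r : ℝ | ∃ τ : A →L[ℂ] ℂ, IsTracialState τ ∧
          r = Real.sqrt (τ (star a * a)).re} ∧
      sSup {r : ℝ | ∃ τ : A →L[ℂ] ℂ, IsTracialState τ ∧
          r = Real.sqrt (τ (star a * a)).re}
        ≤ Real.sqrt M * sSup {r : ℝ | ∃ τ : A →L[ℂ] ℂ, IsTracialState τ ∧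
          (∀ (g : G) (b : A), τ (α g b) = τ b) ∧ r = Real.sqrt (τ (star a * a)).re} := by
  intro a
  have hb : BddAbove {r : ℝ | ∃ τ : A →L[ℂ] ℂ, IsTracialState τ ∧
      r = Real.sqrt (τ (star a * a)).re} := by
    refine ⟨Real.sqrt (‖a‖ ^ 2), ?_⟩
    rintro r ⟨τ, hτ, rfl⟩
    exact Real.sqrt_le_sqrt (aux_bound τ hτ a)
  have hsub : {r : ℝ | ∃ τ : A →L[ℂ] ℂ, IsTracialState τ ∧
      (∀ (g : G) (b : A), τ (α g b) = τ b) ∧ r = Real.sqrt (τ (star a * a)).re} ⊆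
      {r : ℝ | ∃ τ : A →L[ℂ] ℂ, IsTracialState τ ∧ r = Real.sqrt (τ (star a * a)).re} := by
    rintro r ⟨τ, hτ, _, rfl⟩
    exact ⟨τ, hτ, rfl⟩
  obtain ⟨τ₀, hτ₀⟩ := hTA
  constructor
  · refine csSup_le_csSup hb ?_ hsub
    obtain ⟨σ, hσ, hi, _⟩ :=
      aux_avg α hα1 hαmul M τ₀ hτ₀ (horb τ₀ hτ₀).1 (horb τ₀ hτ₀).2
    exact ⟨_, σ, hσ, hi, rfl⟩
  · refine csSup_le ⟨_, τ₀, hτ₀, rfl⟩ ?_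
    rintro r ⟨τ, hτ, rfl⟩
    obtain ⟨σ, hσ, hi, hle⟩ := aux_avg α hα1 hαmul M τ hτ (horb τ hτ).1 (horb τ hτ).2
    calc Real.sqrt (τ (star a * a)).re ≤ Real.sqrt (M * (σ (star a * a)).re) :=
          Real.sqrt_le_sqrt (hle a)
      _ = Real.sqrt M * Real.sqrt (σ (star a * a)).re := Real.sqrt_mul (Nat.cast_nonneg M) _
      _ ≤ _ := mul_le_mul_of_nonneg_left
          (le_csSup (hb.mono hsub) ⟨σ, hσ, hi, rfl⟩) (Real.sqrt_nonneg _)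
end

section
/- Let X be a normed complex vector space, let G be a group acting on X by linear isometries, let x ∈ X, let F ⊆ G be a finite nonempty subset, and set y = |F|^{-1} ∑_{g ∈ F} g·x. Then for every k ∈ G one has ‖k·y − y‖ ≤ 2 ‖x‖ · |kF △ F| / |F|, where kF △ F denotes the symmetric difference of the sets kF = {kg : g ∈ F} and F. -/
open scoped symmDiff

/-- If a group `G` acts on a normed complex vector space `X` by linear
isometries, `x ∈ X`, `F ⊆ G` is a finite nonempty subset and
`y = |F|⁻¹ • ∑_{g ∈ F} g • x`, then for every `k ∈ G` one has
`‖k • y − y‖ ≤ 2‖x‖ · |kF △ F| / |F|`. -/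
theorem stmt3 {X G : Type*} [NormedAddCommGroup X] [NormedSpace ℂ X]
    [Group G] [DecidableEq G]
    (α : G →* (X ≃ₗᵢ[ℂ] X))
    (x : X) (F : Finset G) (hF : F.Nonempty) (k : G)
    (y : X) (hy : y = (F.card : ℂ)⁻¹ • ∑ g ∈ F, α g x) :
    ‖α k y - y‖ ≤ 2 * ‖x‖ * ((F.image fun g => k * g) ∆ F).card / F.card := by
  have hk : α k y = (F.card : ℂ)⁻¹ • ∑ g ∈ F.image (fun g => k * g), α g x := by
    rw [Finset.sum_image (fun a _ b _ h => mul_left_cancel h), hy, map_smul, map_sum]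
    simp [map_mul]
  set A := F.image (fun g => k * g) with hA
  have hb : ∀ S : Finset G, ‖∑ g ∈ S, α g x‖ ≤ S.card * ‖x‖ := by
    intro S
    refine (norm_sum_le _ _).trans ?_
    simp [LinearIsometryEquiv.norm_map]
  have hc : (A ∆ F).card = (A \ F).card + (F \ A).card := by
    have h : A ∆ F = (A \ F) ∪ (F \ A) := rfl
    rw [h]
    exact Finset.card_union_of_disjoint disjoint_sdiff_sdiff
  have hmain : ‖∑ g ∈ A, α g x - ∑ g ∈ F, α g x‖ ≤ 2 * ‖x‖ * (A ∆ F).card := by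
    rw [← Finset.sum_sdiff_sub_sum_sdiff]
    refine (norm_sub_le _ _).trans ?_
    have h1 := hb (A \ F)
    have h2 := hb (F \ A)
    have h3 : 0 ≤ ‖x‖ * (A ∆ F).card := by positivity
    rw [hc] at h3 ⊢
    push_cast at h3 ⊢
    nlinarith
  rw [hk, hy, ← smul_sub, norm_smul, norm_inv, Complex.norm_natCast, div_eq_inv_mul]
  gcongr
end

section
/- Let A be a unital C*-algebra with T(A) nonempty, let G be a discrete group acting on A via α, and suppose there is an integer M ≥ 1 such that every orbit of the induced action α* on T(A) has at most M elements. Let K ⊆ G be a finite nonempty subset, let a_1, …, a_n ∈ A be positive elements, and let δ > 0 satisfy sup_{τ ∈ T(A)^α} min{τ(a_1), …, τ(a_n)} < δ. Define a'_j = |K|^{-1} ∑_{k ∈ K} α_{k^{-1}}(a_j) for j = 1, …, n. Then: (i) τ(a'_j) = τ(a_j) for every τ ∈ T(A)^α and every j; and (ii) sup_{τ ∈ T(A)} min{τ(a'_1), …, τ(a'_n)} < M δ. -/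
open scoped ComplexOrder

theorem aux_cont_s4 {A : Type*} [CStarAlgebra A] (φ : A ≃⋆ₐ[ℂ] A) : Continuous φ :=
  (AddMonoidHomClass.isometry_of_norm φ (StarAlgEquiv.norm_map φ)).continuous

theorem aux_bound_s4 {A : Type*} [CStarAlgebra A] (b : A) :
    ∃ c : A, ((‖b‖ ^ 2 : ℝ) : ℂ) • (1 : A) - star b * b = star c * c := by
  letI := CStarAlgebra.spectralOrder A
  haveI := CStarAlgebra.spectralOrderedRing A
  have h : star b * b ≤ algebraMap ℝ A (‖b‖ ^ 2) := CStarAlgebra.star_mul_le_algebraMap_norm_sq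
  obtain ⟨c, hc⟩ := CStarAlgebra.nonneg_iff_eq_star_mul_self.mp (sub_nonneg.mpr h)
  refine ⟨c, ?_⟩
  rw [← hc, Algebra.algebraMap_eq_smul_one]
  congr 1

/-- Let `A` be a unital C*-algebra with `T(A) ≠ ∅`, let `α` be an action
of a discrete group `G` on `A` whose induced action on `T(A)` has orbits of cardinality at
most `M ≥ 1`.  Let `K ⊆ G` be finite nonempty, `a 0, …, a (n-1)` positive elements, and
`δ > 0` with `sup_{τ ∈ T(A)^α} minⱼ τ(aⱼ) < δ`.  With `a'ⱼ = |K|⁻¹ ∑_{k ∈ K} α_{k⁻¹}(aⱼ)`: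
(i) `τ(a'ⱼ) = τ(aⱼ)` for every invariant trace `τ`; (ii)
`sup_{τ ∈ T(A)} minⱼ τ(a'ⱼ) < M δ`. -/
theorem stmt4 {A : Type*} [NormedRing A] [StarRing A] [CStarRing A]
    [NormedAlgebra ℂ A] [CompleteSpace A] [StarModule ℂ A]
    {G : Type*} [Group G]
    (α : G → A ≃⋆ₐ[ℂ] A)
    (hα1 : ∀ a : A, α 1 a = a)
    (hαmul : ∀ (g h : G) (a : A), α (g * h) a = α g (α h a))
    (hTA : ∃ τ : A →L[ℂ] ℂ, IsTracialState τ)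
    (M : ℕ) (hM : 1 ≤ M)
    (horb : ∀ τ : A →L[ℂ] ℂ, IsTracialState τ →
      (traceOrbit α τ).Finite ∧ (traceOrbit α τ).ncard ≤ M)
    (K : Finset G) (hK : K.Nonempty)
    (n : ℕ) (hn : 1 ≤ n) (a : Fin n → A)
    (hpos : ∀ j, ∃ b : A, a j = star b * b)
    (δ : ℝ) (hδ : 0 < δ)
    (hsup : sSup {r : ℝ | ∃ τ : A →L[ℂ] ℂ, IsTracialState τ ∧
        (∀ (g : G) (c : A), τ (α g c) = τ c) ∧ r = ⨅ j, (τ (a j)).re} < δ)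
    (a' : Fin n → A)
    (ha' : ∀ j, a' j = (K.card : ℂ)⁻¹ • ∑ k ∈ K, α k⁻¹ (a j)) :
    (∀ (τ : A →L[ℂ] ℂ), IsTracialState τ → (∀ (g : G) (c : A), τ (α g c) = τ c) →
        ∀ j, τ (a' j) = τ (a j)) ∧
      sSup {r : ℝ | ∃ τ : A →L[ℂ] ℂ, IsTracialState τ ∧ r = ⨅ j, (τ (a' j)).re}
        < M * δ := by
  letI : CStarAlgebra A := { }
  have hcont : ∀ g, Continuous (α g) := fun g => aux_cont_s4 (α g)
  have hbd : ∀ j, ∃ C : ℝ, ∀ τ : A →L[ℂ] ℂ, IsTracialState τ → (τ (a j)).re ≤ C := by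
    intro j
    obtain ⟨b, hb⟩ := hpos j
    obtain ⟨c, hc⟩ := aux_bound_s4 b
    refine ⟨‖b‖ ^ 2, fun τ hτ => ?_⟩
    have h1 := hτ.2.1 c
    rw [← hc, map_sub, map_smul, hτ.1, ← hb] at h1
    have h2 := (Complex.le_def.mp h1).1
    rw [smul_eq_mul, mul_one, Complex.sub_re, Complex.ofReal_re, Complex.zero_re] at h2
    linarith
  have hKc : (K.card : ℂ) ≠ 0 := by exact_mod_cast hK.card_pos.ne'
  have hKr : (0 : ℝ) < K.card := by exact_mod_cast hK.card_pos
  refine ⟨?_, ?_⟩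
  · intro τ hτ hinv j
    rw [ha' j, map_smul, map_sum]
    simp only [hinv, Finset.sum_const, nsmul_eq_mul, smul_eq_mul]
    field_simp
  haveI : Nonempty (Fin n) := ⟨⟨0, hn⟩⟩
  set S := {r : ℝ | ∃ τ : A →L[ℂ] ℂ, IsTracialState τ ∧
        (∀ (g : G) (c : A), τ (α g c) = τ c) ∧ r = ⨅ j, (τ (a j)).re} with hS
  have hSb : BddAbove S := by
    obtain ⟨C, hC⟩ := hbd ⟨0, hn⟩
    refine ⟨C, ?_⟩
    rintro r ⟨τ, hτ, -, rfl⟩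
    exact (ciInf_le (Set.finite_range _).bddBelow ⟨0, hn⟩).trans (hC τ hτ)
  let L : G → (A →L[ℂ] A) := fun g =>
    { toFun := α g
      map_add' := fun x y => map_add (α g) x y
      map_smul' := fun c x => map_smul (α g) c x
      cont := hcont g }
  have hL : ∀ g x, L g x = α g x := fun g x => rfl
  have hMr : (0 : ℝ) < M := by exact_mod_cast hM
  refine lt_of_le_of_lt ?_ (mul_lt_mul_of_pos_left hsup hMr)
  refine csSup_le ?_ ?_
  · obtain ⟨τ, hτ⟩ := hTA
    exact ⟨_, τ, hτ, rfl⟩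
  rintro r ⟨τ, hτ, rfl⟩
  obtain ⟨hfin, hcard⟩ := horb τ hτ
  set F := hfin.toFinset with hF
  have hFc : F.card ≤ M := by rwa [hF, ← Set.ncard_eq_toFinset_card _ hfin]
  have hmem : ∀ ω, ω ∈ F ↔ ∃ g : G, ∀ x : A, ω x = τ (α g x) := by
    intro ω
    rw [hF, Set.Finite.mem_toFinset]
    rfl
  have hgF : ∀ g, τ.comp (L g) ∈ F := fun g => (hmem _).2 ⟨g, fun x => rfl⟩
  have hF0 : F.Nonempty := ⟨_, hgF 1⟩
  have hFC : (F.card : ℂ) ≠ 0 := by exact_mod_cast hF0.card_pos.ne'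
  have hFR : (0 : ℝ) < F.card := by exact_mod_cast hF0.card_pos
  have htr : ∀ ω ∈ F, IsTracialState ω := by
    intro ω hω
    obtain ⟨g, hg⟩ := (hmem ω).1 hω
    refine ⟨by rw [hg, map_one, hτ.1], fun x => ?_, fun x y => ?_⟩
    · rw [hg, map_mul, map_star]
      exact hτ.2.1 _
    · rw [hg, hg, map_mul (α g), map_mul (α g)]
      exact hτ.2.2 _ _
  let σ : A →L[ℂ] ℂ := (F.card : ℂ)⁻¹ • ∑ ω ∈ F, ω
  have hσ : ∀ x, σ x = (F.card : ℂ)⁻¹ * ∑ ω ∈ F, ω x := by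
    intro x
    simp [σ]
  have hσt : IsTracialState σ := by
    refine ⟨?_, fun x => ?_, fun x y => ?_⟩
    · rw [hσ, Finset.sum_congr rfl (fun ω hω => (htr ω hω).1)]
      simp [hFC]
    · rw [hσ]
      refine mul_nonneg ?_ (Finset.sum_nonneg fun ω hω => (htr ω hω).2.1 x)
      have : ((F.card : ℂ))⁻¹ = (((F.card : ℝ)⁻¹ : ℝ) : ℂ) := by push_cast; rfl
      rw [this]
      exact_mod_cast (inv_pos.mpr hFR).le
    · rw [hσ, hσ, Finset.sum_congr rfl (fun ω hω => (htr ω hω).2.2 x y)]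
  have hmove : ∀ g, ∀ ω ∈ F, ω.comp (L g) ∈ F := by
    intro g ω hω
    obtain ⟨h, hh⟩ := (hmem ω).1 hω
    refine (hmem _).2 ⟨h * g, fun x => ?_⟩
    rw [ContinuousLinearMap.comp_apply, hL, hh, hαmul]
  have hσi : ∀ (g : G) (c : A), σ (α g c) = σ c := by
    intro g c
    rw [hσ, hσ]
    congr 1
    refine Finset.sum_nbij' (fun ω => ω.comp (L g)) (fun ω => ω.comp (L g⁻¹))
      (hmove g) (hmove g⁻¹) ?_ ?_ ?_
    · intro ω _
      ext x
      simp only [ContinuousLinearMap.comp_apply, hL]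
      rw [← hαmul, mul_inv_cancel, hα1]
    · intro ω _
      ext x
      simp only [ContinuousLinearMap.comp_apply, hL]
      rw [← hαmul, inv_mul_cancel, hα1]
    · intro ω _
      rfl
  have hnn : ∀ ω : A →L[ℂ] ℂ, IsTracialState ω → ∀ j, 0 ≤ (ω (a j)).re := by
    intro ω hω j
    obtain ⟨b, hb⟩ := hpos j
    rw [hb]
    exact (Complex.le_def.mp (hω.2.1 b)).1
  have key : ∀ j, (τ (a' j)).re ≤ M * (σ (a j)).re := by
    intro j
    have e1 : (σ (a j)).re = (F.card : ℝ)⁻¹ * ∑ ω ∈ F, (ω (a j)).re := by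
      have : ((F.card : ℂ))⁻¹ = (((F.card : ℝ)⁻¹ : ℝ) : ℂ) := by push_cast; rfl
      rw [hσ, this, Complex.re_ofReal_mul, Complex.re_sum]
    have e2 : (τ (a' j)).re = (K.card : ℝ)⁻¹ * ∑ k ∈ K, (τ (α k⁻¹ (a j))).re := by
      have : ((K.card : ℂ))⁻¹ = (((K.card : ℝ)⁻¹ : ℝ) : ℂ) := by push_cast; rfl
      rw [ha', map_smul, map_sum, smul_eq_mul, this, Complex.re_ofReal_mul, Complex.re_sum]
    have e3 : ∑ ω ∈ F, (ω (a j)).re = F.card * (σ (a j)).re := by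
      rw [e1]
      field_simp
    have e4 : ∑ k ∈ K, (τ (α k⁻¹ (a j))).re ≤ K.card * (F.card * (σ (a j)).re) := by
      rw [← nsmul_eq_mul, ← e3]
      refine Finset.sum_le_card_nsmul _ _ _ fun k _ => ?_
      exact Finset.single_le_sum (f := fun ω : A →L[ℂ] ℂ => (ω (a j)).re)
        (fun ω hω => hnn ω (htr ω hω) j) (hgF k⁻¹)
    have e5 : (τ (a' j)).re ≤ F.card * (σ (a j)).re := by
      rw [e2, inv_mul_le_iff₀ hKr]
      exact e4
    refine e5.trans (mul_le_mul_of_nonneg_right ?_ (hnn σ hσt j))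
    exact_mod_cast hFc
  obtain ⟨j, hj⟩ := exists_eq_ciInf_of_finite (f := fun j => (σ (a j)).re)
  have h1 : (⨅ j, (τ (a' j)).re) ≤ (τ (a' j)).re :=
    ciInf_le (Set.finite_range _).bddBelow j
  refine (h1.trans (key j)).trans (mul_le_mul_of_nonneg_left ?_ hMr.le)
  exact le_csSup hSb ⟨σ, hσt, hσi, hj⟩
end

section
/- Let X be a compact Hausdorff space, let A and B be unital C*-algebras, let ζ_A : C(X,ℂ) → A and ζ_B : C(X,ℂ) → B be unital *-homomorphisms whose ranges lie in the centers of A and B respectively, and let φ : A → B be a unital *-homomorphism with φ ∘ ζ_A = ζ_B. Then φ is injective if and only if for every x ∈ X and every a ∈ A, φ(a) ∈ J_x(B) implies a ∈ J_x(A); that is, φ is injective precisely when every induced fiber map A/J_x(A) → B/J_x(B) is injective. -/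
/-- For a unital `C(X)`-algebra `(A, ζ)` and a point `x : X`, the ideal `J_x(A)`:
the closed linear span of `{ζ(f) · a : f ∈ C(X, ℂ), f(x) = 0, a ∈ A}`. -/
def fiberIdeal {X A : Type*} [TopologicalSpace X] [CompactSpace X] [T2Space X]
    [NormedRing A] [StarRing A] [NormedAlgebra ℂ A]
    (ζ : C(X, ℂ) →⋆ₐ[ℂ] A) (x : X) : Set A :=
  closure (Submodule.span ℂ
    {y : A | ∃ (f : C(X, ℂ)) (a : A), f x = 0 ∧ y = ζ f * a} : Set A)

theorem aux_norm_le {X A : Type*} [TopologicalSpace X] [CompactSpace X]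
    [NormedRing A] [StarRing A] [CStarRing A] [NormedAlgebra ℂ A]
    [CompleteSpace A] [StarModule ℂ A]
    (ζ : C(X, ℂ) →⋆ₐ[ℂ] A) (f : C(X, ℂ)) : ‖ζ f‖ ≤ ‖f‖ := by
  let : CStarAlgebra A := { }
  let : CStarAlgebra C(X, ℂ) := { }
  exact NonUnitalStarAlgHom.norm_apply_le ζ f

theorem aux_isometry {A B : Type*}
    [NormedRing A] [StarRing A] [CStarRing A] [NormedAlgebra ℂ A]
    [CompleteSpace A] [StarModule ℂ A]
    [NormedRing B] [StarRing B] [CStarRing B] [NormedAlgebra ℂ B]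
    [CompleteSpace B] [StarModule ℂ B]
    (φ : A →⋆ₐ[ℂ] B) (h : Function.Injective φ) (a : A) : ‖φ a‖ = ‖a‖ := by
  let : CStarAlgebra A := { }
  let : CStarAlgebra B := { }
  exact NonUnitalStarAlgHom.norm_map φ h a

theorem aux_of_small {X A : Type*} [TopologicalSpace X] [CompactSpace X] [T2Space X]
    [NormedRing A] [StarRing A] [CStarRing A] [NormedAlgebra ℂ A]
    [CompleteSpace A] [StarModule ℂ A]
    (ζ : C(X, ℂ) →⋆ₐ[ℂ] A) (x : X) (a : A)
    (h : ∀ ε > 0, ∃ f : C(X, ℂ), f x = 1 ∧ ‖f‖ ≤ 1 ∧ ‖ζ f * a‖ < ε) : a ∈ fiberIdeal ζ x := by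
  rw [fiberIdeal, Metric.mem_closure_iff]
  intro ε hε
  obtain ⟨f, hf, -, h2⟩ := h ε hε
  refine ⟨ζ (1 - f) * a, Submodule.subset_span ⟨1 - f, a, by simp [hf], rfl⟩, ?_⟩
  rw [dist_eq_norm]
  simpa [sub_mul] using h2

theorem aux_small {X A : Type*} [TopologicalSpace X] [CompactSpace X] [T2Space X]
    [NormedRing A] [StarRing A] [CStarRing A] [NormedAlgebra ℂ A]
    [CompleteSpace A] [StarModule ℂ A]
    (ζ : C(X, ℂ) →⋆ₐ[ℂ] A) (x : X) (a : A) (ha : a ∈ fiberIdeal ζ x) :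
    ∀ ε > 0, ∃ f : C(X, ℂ), f x = 1 ∧ ‖f‖ ≤ 1 ∧ ‖ζ f * a‖ < ε := by
  have contr : ∀ (f : C(X, ℂ)) (b : A), ‖f‖ ≤ 1 → ‖ζ f * b‖ ≤ ‖b‖ := fun f b hf =>
    (norm_mul_le _ _).trans
      (mul_le_of_le_one_left (norm_nonneg _) ((aux_norm_le ζ f).trans hf))
  have key : ∀ b ∈ Submodule.span ℂ {y : A | ∃ (f : C(X, ℂ)) (a : A), f x = 0 ∧ y = ζ f * a},
      ∀ ε > 0, ∃ f : C(X, ℂ), f x = 1 ∧ ‖f‖ ≤ 1 ∧ ‖ζ f * b‖ < ε := by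
    intro b hb
    induction hb using Submodule.span_induction with
    | mem y hy =>
      obtain ⟨g, a, hg, rfl⟩ := hy
      intro ε hε
      obtain ⟨c, hc, hcε⟩ : ∃ c : ℝ, 0 < c ∧ ‖a‖ < c * ε := by
        refine ⟨(‖a‖ + 1) / ε, by positivity, ?_⟩
        rw [div_mul_cancel₀ _ hε.ne']; linarith
      have hpos : ∀ y, 0 < 1 + c * ‖g y‖ := fun y => by positivity
      let f : C(X, ℂ) := ⟨fun y => (((1 + c * ‖g y‖)⁻¹ : ℝ) : ℂ),
        Complex.continuous_ofReal.comp (Continuous.inv₀ (by fun_prop) fun y => (hpos y).ne')⟩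
      have hfv : ∀ y, f y = (((1 + c * ‖g y‖)⁻¹ : ℝ) : ℂ) := fun _ => rfl
      have hfn : ∀ y, ‖f y‖ = (1 + c * ‖g y‖)⁻¹ := fun y => by
        rw [hfv, Complex.norm_real, Real.norm_of_nonneg (inv_pos.2 (hpos y)).le]
      refine ⟨f, by simp [hfv, hg], ?_, ?_⟩
      · rw [ContinuousMap.norm_le _ zero_le_one]
        intro y
        rw [hfn]
        exact inv_le_one_of_one_le₀ (by have : 0 ≤ c * ‖g y‖ := by positivity
                                        linarith)
      · have h1 : ‖f * g‖ ≤ c⁻¹ := by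
          rw [ContinuousMap.norm_le _ (by positivity)]
          intro y
          rw [ContinuousMap.mul_apply, norm_mul, hfn, inv_mul_le_iff₀ (hpos y), add_mul, one_mul,
            mul_comm c, mul_assoc, mul_inv_cancel₀ hc.ne', mul_one]
          have : 0 < c⁻¹ := by positivity
          linarith
        rw [← mul_assoc, ← map_mul]
        calc _ ≤ ‖ζ (f * g)‖ * ‖a‖ := norm_mul_le _ _
          _ ≤ c⁻¹ * ‖a‖ := by gcongr; exact (aux_norm_le ζ _).trans h1
          _ < ε := by rwa [inv_mul_lt_iff₀ hc]
    | zero => intro ε hε; exact ⟨1, by simp, (ContinuousMap.norm_le _ zero_le_one).2 (by simp), by simpa using hε⟩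
    | add u v _ _ hu hv =>
      intro ε hε
      obtain ⟨f, hf, hf1, hf2⟩ := hu (ε / 2) (by positivity)
      obtain ⟨g, hg, hg1, hg2⟩ := hv (ε / 2) (by positivity)
      refine ⟨f * g, by simp [hf, hg], (norm_mul_le _ _).trans
        (mul_le_one₀ hf1 (norm_nonneg _) hg1), ?_⟩
      have e : ζ (f * g) * (u + v) = ζ g * (ζ f * u) + ζ f * (ζ g * v) := by
        rw [mul_add, ← mul_assoc, ← mul_assoc, ← map_mul, ← map_mul, mul_comm g f]
      rw [e]
      have := norm_add_le (ζ g * (ζ f * u)) (ζ f * (ζ g * v))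
      have := contr g (ζ f * u) hg1
      have := contr f (ζ g * v) hf1
      linarith
    | smul c u _ hu =>
      intro ε hε
      obtain ⟨f, hf, hf1, hf2⟩ := hu (ε / (‖c‖ + 1)) (by positivity)
      refine ⟨f, hf, hf1, ?_⟩
      rw [mul_smul_comm, norm_smul]
      rw [lt_div_iff₀ (by positivity)] at hf2
      have := norm_nonneg (ζ f * u)
      nlinarith
  intro ε hε
  rw [fiberIdeal, Metric.mem_closure_iff] at ha
  obtain ⟨b, hb, hab⟩ := ha (ε / 2) (by positivity)
  obtain ⟨f, hf, hf1, hf2⟩ := key b hb (ε / 2) (by positivity)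
  refine ⟨f, hf, hf1, ?_⟩
  have e : ζ f * a = ζ f * (a - b) + ζ f * b := by rw [← mul_add]; simp
  rw [e]
  rw [dist_eq_norm] at hab
  have := norm_add_le (ζ f * (a - b)) (ζ f * b)
  have := contr f (a - b) hf1
  linarith

theorem aux_zero {X A : Type*} [TopologicalSpace X] [CompactSpace X] [T2Space X]
    [NormedRing A] [StarRing A] [CStarRing A] [NormedAlgebra ℂ A]
    [CompleteSpace A] [StarModule ℂ A]
    (ζ : C(X, ℂ) →⋆ₐ[ℂ] A) (hζ : ∀ (f : C(X, ℂ)) (a : A), ζ f * a = a * ζ f)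
    (a : A) (h : ∀ x, a ∈ fiberIdeal ζ x) : a = 0 := by
  by_contra ha
  have : Nontrivial A := ⟨a, 0, ha⟩
  have hapos : 0 < ‖a‖ := norm_pos_iff.2 ha
  let : CStarAlgebra A := { }
  obtain ⟨l, hl, hln⟩ := spectrum.exists_nnnorm_eq_spectralRadius (star a * a)
  rw [(IsSelfAdjoint.star_mul_self a).spectralRadius_eq_nnnorm] at hln
  have hln' : ‖l‖ = ‖a‖ * ‖a‖ := by
    rw [← CStarRing.norm_star_mul_self]
    exact congrArg NNReal.toReal (ENNReal.coe_injective hln)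
  set c := star a * a with hc
  set w : A := algebraMap ℂ A l - c with hw
  let K : Ideal C(X, ℂ) :=
    { carrier := {g | ∃ d, w * d = ζ g ∧ d * w = ζ g}
      zero_mem' := ⟨0, by simp, by simp⟩
      add_mem' := by
        rintro f g ⟨d, h1, h2⟩ ⟨e, h3, h4⟩
        exact ⟨d + e, by rw [mul_add, h1, h3, map_add], by rw [add_mul, h2, h4, map_add]⟩
      smul_mem' := by
        rintro f g ⟨d, h1, h2⟩
        refine ⟨ζ f * d, ?_, ?_⟩
        · rw [← mul_assoc, ← hζ, mul_assoc, h1, smul_eq_mul, map_mul]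
        · rw [mul_assoc, h2, smul_eq_mul, map_mul] }
  have hK : K ≠ ⊤ := by
    intro hK
    obtain ⟨d, h1, h2⟩ : (1 : C(X, ℂ)) ∈ K := by rw [hK]; trivial
    rw [map_one] at h1 h2
    exact (spectrum.mem_iff.1 hl) ⟨⟨w, d, h1, h2⟩, rfl⟩
  apply K.closure_ne_top hK
  rw [← ContinuousMap.idealOfSet_ofIdeal_eq_closure]
  have huniv : ContinuousMap.setOfIdeal K = Set.univ := by
    rw [Set.eq_univ_iff_forall]
    intro x
    rw [ContinuousMap.mem_setOfIdeal]
    obtain ⟨f, hf, -, hfa⟩ := aux_small ζ x a (h x) (‖a‖ / 2) (by positivity)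
    have hm : ∀ y, (0 : ℝ) < max (‖f y‖ ^ 2) (1 / 4) := fun y =>
      lt_max_of_lt_right (by norm_num)
    let k : C(X, ℂ) := ⟨fun y => star (f y) * (((max (‖f y‖ ^ 2) (1 / 4))⁻¹ : ℝ) : ℂ),
      Continuous.mul (by fun_prop) (Complex.continuous_ofReal.comp
        (Continuous.inv₀ (by fun_prop) fun y => (hm y).ne'))⟩
    have hkv : ∀ y, k y = star (f y) * (((max (‖f y‖ ^ 2) (1 / 4))⁻¹ : ℝ) : ℂ) := fun _ => rfl
    let g : C(X, ℂ) := ⟨fun y => ((max (‖f y‖ ^ 2 - 1 / 4) 0 : ℝ) : ℂ), by fun_prop⟩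
    have hgv : ∀ y, g y = ((max (‖f y‖ ^ 2 - 1 / 4) 0 : ℝ) : ℂ) := fun _ => rfl
    have hk : ‖k‖ ≤ 2 := by
      rw [ContinuousMap.norm_le _ zero_le_two]
      intro y
      rw [hkv, norm_mul, norm_star, Complex.norm_real,
        Real.norm_of_nonneg (inv_pos.2 (hm y)).le, ← div_eq_mul_inv, div_le_iff₀ (hm y)]
      have h1 := le_max_left (‖f y‖ ^ 2) (1 / 4)
      have h2 := le_max_right (‖f y‖ ^ 2) (1 / 4)
      nlinarith [sq_nonneg (‖f y‖ - 1 / 2)]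
    have hgk : g * (k * f) = g := by
      ext y
      rw [ContinuousMap.mul_apply, ContinuousMap.mul_apply, hgv, hkv]
      rcases le_total (‖f y‖ ^ 2) (1 / 4) with h1 | h1
      · rw [max_eq_right (by linarith : ‖f y‖ ^ 2 - 1 / 4 ≤ 0)]; simp
      · rw [max_eq_left h1]
        have h2 : star (f y) * f y = ((‖f y‖ ^ 2 : ℝ) : ℂ) := by
          have := Complex.conj_mul' (f y)
          simpa using this
        have h3 : star (f y) * (((‖f y‖ ^ 2)⁻¹ : ℝ) : ℂ) * f y = 1 := by
          rw [mul_right_comm, h2, ← Complex.ofReal_mul, mul_inv_cancel₀ (by linarith),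
            Complex.ofReal_one]
        rw [h3, mul_one]
    refine ⟨g, ?_, ?_⟩
    swap
    · rw [hgv, hf]; norm_num
    have hsmall : ‖ζ (k * f) * c‖ < ‖l‖ := by
      have e : ζ (k * f) * c = ζ k * (star a * (ζ f * a)) := by
        rw [map_mul, mul_assoc, hc, ← mul_assoc (ζ f), hζ f (star a), mul_assoc]
      rw [e, hln']
      calc _ ≤ ‖ζ k‖ * (‖star a‖ * ‖ζ f * a‖) :=
            (norm_mul_le _ _).trans (by gcongr; exact norm_mul_le _ _)
        _ ≤ 2 * (‖a‖ * ‖ζ f * a‖) := by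
            rw [norm_star]; gcongr; exact (aux_norm_le ζ k).trans hk
        _ < ‖a‖ * ‖a‖ := by nlinarith
    obtain ⟨u, hu⟩ : IsUnit (algebraMap ℂ A l - ζ (k * f) * c) :=
      spectrum.mem_resolventSet_iff.1 (spectrum.mem_resolventSet_of_norm_lt hsmall)
    have hgw : ζ g * (u : A) = ζ g * w := by
      rw [hu, hw, mul_sub, mul_sub, ← mul_assoc, ← map_mul, hgk]
    have hcomm : Commute (u : A) w := by
      rw [hu, hw]
      refine Commute.sub_left (Algebra.commutes _ _) (Commute.sub_right
        (Algebra.commutes _ _).symm ?_)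
      exact Commute.mul_left (hζ _ _) (Commute.refl _)
    have hcomm' : ((u⁻¹ : Aˣ) : A) * w = w * ((u⁻¹ : Aˣ) : A) := hcomm.units_inv_left
    have e1 : ζ g * w * ((u⁻¹ : Aˣ) : A) = ζ g := by
      rw [← hgw, mul_assoc, Units.mul_inv, mul_one]
    refine ⟨ζ g * ((u⁻¹ : Aˣ) : A), ?_, ?_⟩
    · rw [← mul_assoc, ← hζ, e1]
    · rw [mul_assoc, hcomm', ← mul_assoc, e1]
  rw [huniv]
  ext f
  simp [ContinuousMap.mem_idealOfSet]

/-- Let `X` be a compact Hausdorff space, `A`, `B` unital C*-algebras,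
`ζ_A : C(X) → A`, `ζ_B : C(X) → B` unital *-homomorphisms with central ranges, and
`φ : A → B` a unital *-homomorphism with `φ ∘ ζ_A = ζ_B`.  Then `φ` is injective iff all
the induced fiber maps `A/J_x(A) → B/J_x(B)` are injective, i.e. iff for every `x` and
`a`, `φ a ∈ J_x(B)` implies `a ∈ J_x(A)`. -/
theorem stmt8 {X A B : Type*} [TopologicalSpace X] [CompactSpace X] [T2Space X]
    [NormedRing A] [StarRing A] [CStarRing A] [NormedAlgebra ℂ A]
    [CompleteSpace A] [StarModule ℂ A]
    [NormedRing B] [StarRing B] [CStarRing B] [NormedAlgebra ℂ B]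
    [CompleteSpace B] [StarModule ℂ B]
    (ζA : C(X, ℂ) →⋆ₐ[ℂ] A) (ζB : C(X, ℂ) →⋆ₐ[ℂ] B)
    (hζA : ∀ (f : C(X, ℂ)) (a : A), ζA f * a = a * ζA f)
    (hζB : ∀ (f : C(X, ℂ)) (b : B), ζB f * b = b * ζB f)
    (φ : A →⋆ₐ[ℂ] B) (hφ : ∀ f : C(X, ℂ), φ (ζA f) = ζB f) :
    Function.Injective φ ↔
      ∀ (x : X) (a : A), φ a ∈ fiberIdeal ζB x → a ∈ fiberIdeal ζA x := by
  constructor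
  · intro hinj x a ha
    refine aux_of_small ζA x a fun ε hε => ?_
    obtain ⟨f, hf, hf1, hf2⟩ := aux_small ζB x _ ha ε hε
    refine ⟨f, hf, hf1, ?_⟩
    rwa [← aux_isometry φ hinj, map_mul, hφ]
  · intro h
    rw [injective_iff_map_eq_zero]
    intro a ha
    refine aux_zero ζA hζA a fun x => h x a ?_
    rw [ha]
    exact subset_closure (Submodule.zero_mem _)
end

section
/- Let X be a compact Hausdorff space, let A and B be unital C*-algebras, let ζ_A : C(X,ℂ) → A and ζ_B : C(X,ℂ) → B be unital *-homomorphisms whose ranges lie in the centers of A and B respectively, and let φ : A → B be a unital *-homomorphism with φ ∘ ζ_A = ζ_B. Then φ is surjective if and only if for every x ∈ X and every b ∈ B there exists a ∈ A with b − φ(a) ∈ J_x(B); that is, φ is surjective precisely when every induced fiber map A/J_x(A) → B/J_x(B) is surjective. -/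
open scoped CStarAlgebra in
/-- Bounded lifting of selfadjoint elements in the range of a star homomorphism. -/
theorem lift_sa {A B : Type*} [CStarAlgebra A] [CStarAlgebra B] (φ : A →⋆ₐ[ℂ] B)
    (h : A) (hh : IsSelfAdjoint h) : ∃ a : A, φ a = φ h ∧ ‖a‖ ≤ ‖φ h‖ := by
  set c := ‖φ h‖ with hc
  have hc0 : 0 ≤ c := norm_nonneg _
  have hφh : IsSelfAdjoint (φ h) := hh.map φ
  have hcont : Continuous φ := by
    exact AddMonoidHomClass.continuous_of_bound φ 1
      (fun x => by simpa using NonUnitalStarAlgHom.norm_apply_le φ x)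
  refine ⟨cfc (fun t : ℝ => max (-c) (min t c)) h, ?_, ?_⟩
  · rw [StarAlgHom.map_cfc φ (fun t : ℝ => max (-c) (min t c)) h (by fun_prop) hcont hh hφh]
    conv_rhs => rw [← cfc_id ℝ (φ h) hφh]
    apply cfc_congr
    intro t ht
    have hn : Nontrivial B := by
      by_contra hB
      rw [not_nontrivial_iff_subsingleton] at hB
      simp [spectrum.of_subsingleton] at ht
    have h1 : ‖t‖ ≤ c := spectrum.norm_le_norm_of_mem ht
    rw [Real.norm_eq_abs, abs_le] at h1
    simp [h1.1, h1.2]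
  · apply norm_cfc_le hc0
    intro t ht
    rw [Real.norm_eq_abs, abs_le]
    refine ⟨le_max_left _ _, max_le (by linarith) (min_le_right _ _)⟩

theorem lift_bdd {A B : Type*} [CStarAlgebra A] [CStarAlgebra B] (φ : A →⋆ₐ[ℂ] B)
    (x : A) : ∃ a : A, φ a = φ x ∧ ‖a‖ ≤ 2 * ‖φ x‖ := by
  obtain ⟨a₁, h1, n1⟩ := lift_sa φ (realPart x : A) (realPart x).2
  obtain ⟨a₂, h2, n2⟩ := lift_sa φ (imaginaryPart x : A) (imaginaryPart x).2
  have e1 : φ (realPart x : A) = (realPart (φ x) : B) := by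
    simp only [realPart_apply_coe, map_add, map_star, ← Complex.coe_smul, map_smul]
  have e2 : φ (imaginaryPart x : A) = (imaginaryPart (φ x) : B) := by
    simp only [imaginaryPart_apply_coe, map_sub, map_star, ← Complex.coe_smul, map_smul]
  have b1 : ‖φ (realPart x : A)‖ ≤ ‖φ x‖ := by rw [e1]; exact realPart.norm_le (φ x)
  have b2 : ‖φ (imaginaryPart x : A)‖ ≤ ‖φ x‖ := by rw [e2]; exact imaginaryPart.norm_le (φ x)
  refine ⟨a₁ + Complex.I • a₂, ?_, ?_⟩
  · conv_rhs => rw [← realPart_add_I_smul_imaginaryPart x]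
    simp only [map_add, map_smul, h1, h2]
  · refine (norm_add_le _ _).trans ?_
    rw [norm_smul]
    simp
    linarith

theorem surj_of_dense {A B : Type*} [CStarAlgebra A] [CStarAlgebra B] (φ : A →⋆ₐ[ℂ] B)
    (hd : ∀ b : B, b ∈ closure (Set.range φ)) : Function.Surjective φ := by
  let f : NormedAddGroupHom A B :=
    { toFun := φ, map_add' := map_add φ,
      bound' := ⟨1, fun x => by simpa using NonUnitalStarAlgHom.norm_apply_le φ x⟩ }
  have hyp : f.SurjectiveOnWith f.range 2 := by
    rintro b ⟨x, rfl⟩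
    obtain ⟨a, h1, h2⟩ := lift_bdd φ x
    exact ⟨a, h1, h2⟩
  have := controlled_closure_of_complete (by norm_num) (zero_lt_one) hyp
  intro b
  have hb : b ∈ f.range.topologicalClosure := by
    have := hd b
    rw [← SetLike.mem_coe, AddSubgroup.topologicalClosure_coe]
    convert this
    ext y
    rfl
  obtain ⟨a, ha, -⟩ := this b hb
  exact ⟨a, ha⟩

theorem sum_sa_bound {B ι : Type*} [CStarAlgebra B] [PartialOrder B] [StarOrderedRing B]
    (s : Finset ι) (q r : ι → B) (hq : ∑ i ∈ s, star (q i) * q i = 1) (ε : ℝ) (hε : 0 ≤ ε)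
    (hr : ∀ i ∈ s, IsSelfAdjoint (r i)) (hn : ∀ i ∈ s, ‖r i‖ ≤ ε) :
    ‖∑ i ∈ s, star (q i) * r i * q i‖ ≤ 3 * ε * (1 + ‖(1 : B)‖) := by
  set S := ∑ i ∈ s, star (q i) * r i * q i with hS
  have key : ∑ i ∈ s, star (q i) * algebraMap ℝ B ε * q i = algebraMap ℝ B ε := by
    have : ∀ i ∈ s, star (q i) * algebraMap ℝ B ε * q i = algebraMap ℝ B ε * (star (q i) * q i) := by
      intro i _
      rw [← Algebra.commutes, mul_assoc]
    rw [Finset.sum_congr rfl this, ← Finset.mul_sum, hq, mul_one]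
  have up : S ≤ algebraMap ℝ B ε := by
    rw [← key]
    refine Finset.sum_le_sum fun i hi => star_left_conjugate_le_conjugate ?_ _
    exact (hr i hi).le_algebraMap_norm_self.trans (algebraMap_mono B (hn i hi))
  have dn : -algebraMap ℝ B ε ≤ S := by
    rw [← key, ← Finset.sum_neg_distrib]
    refine Finset.sum_le_sum fun i hi => ?_
    have : -algebraMap ℝ B ε ≤ r i :=
      (neg_le_neg (algebraMap_mono B (hn i hi))).trans (hr i hi).neg_algebraMap_norm_le_self
    simpa using star_left_conjugate_le_conjugate this (q i)
  have h0 : 0 ≤ S + algebraMap ℝ B ε := by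
    simpa using add_le_add_left dn (algebraMap ℝ B ε)
  have h1 : S + algebraMap ℝ B ε ≤ algebraMap ℝ B (2 * ε) := by
    rw [two_mul, map_add]
    gcongr
  have h2 := (CStarAlgebra.norm_le_iff_le_algebraMap _ (by positivity) h0).2 h1
  have h3 : ‖algebraMap ℝ B ε‖ ≤ ε * ‖(1 : B)‖ := by
    rw [norm_algebraMap, Real.norm_of_nonneg hε]
  have h4 : ‖S‖ ≤ ‖S + algebraMap ℝ B ε‖ + ‖algebraMap ℝ B ε‖ := by
    simpa using norm_sub_le (S + algebraMap ℝ B ε) (algebraMap ℝ B ε)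
  nlinarith [norm_nonneg (1 : B), mul_nonneg hε (norm_nonneg (1 : B))]

theorem sum_bound {B ι : Type*} [CStarAlgebra B]
    (s : Finset ι) (q r : ι → B) (hq : ∑ i ∈ s, star (q i) * q i = 1) (ε : ℝ) (hε : 0 ≤ ε)
    (hn : ∀ i ∈ s, ‖r i‖ ≤ ε) :
    ‖∑ i ∈ s, star (q i) * r i * q i‖ ≤ 6 * ε * (1 + ‖(1 : B)‖) := by
  letI := CStarAlgebra.spectralOrder B
  haveI := CStarAlgebra.spectralOrderedRing B
  have h1 := sum_sa_bound s q (fun i => (realPart (r i) : B)) hq ε hε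
    (fun i _ => (realPart (r i)).2) (fun i hi => (realPart.norm_le _).trans (hn i hi))
  have h2 := sum_sa_bound s q (fun i => (imaginaryPart (r i) : B)) hq ε hε
    (fun i _ => (imaginaryPart (r i)).2) (fun i hi => (imaginaryPart.norm_le _).trans (hn i hi))
  have e : ∑ i ∈ s, star (q i) * r i * q i =
      ∑ i ∈ s, star (q i) * (realPart (r i) : B) * q i
      + Complex.I • ∑ i ∈ s, star (q i) * (imaginaryPart (r i) : B) * q i := by
    rw [Finset.smul_sum, ← Finset.sum_add_distrib]
    refine Finset.sum_congr rfl fun i _ => ?_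
    conv_lhs => rw [← realPart_add_I_smul_imaginaryPart (r i)]
    simp [mul_add, add_mul]
  rw [e]
  refine (norm_add_le _ _).trans ?_
  rw [norm_smul, Complex.norm_I, one_mul]
  linarith

/-- Continuous truncation vanishing on a ball. -/
theorem trunc_exists (δ : ℝ) (hδ : 0 < δ) : ∃ k : C(ℂ, ℂ),
    (∀ z, ‖z‖ < δ → k z = 0) ∧ ∀ z, ‖z - k z‖ ≤ δ := by
  refine ⟨⟨fun z => ((1 - δ / max ‖z‖ δ : ℝ) : ℂ) * z, ?_⟩, ?_, ?_⟩
  · have : ∀ z : ℂ, max ‖z‖ δ ≠ 0 := fun z => (hδ.trans_le (le_max_right _ _)).ne'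
    fun_prop (disch := assumption)
  · intro z hz
    simp [max_eq_right hz.le, hδ.ne']
  · intro z
    have hp : 0 < max ‖z‖ δ := hδ.trans_le (le_max_right _ _)
    have : z - ((1 - δ / max ‖z‖ δ : ℝ) : ℂ) * z = ((δ / max ‖z‖ δ : ℝ) : ℂ) * z := by
      push_cast; ring
    change ‖z - ((1 - δ / max ‖z‖ δ : ℝ) : ℂ) * z‖ ≤ δ
    rw [this, norm_mul, Complex.norm_real, Real.norm_of_nonneg (by positivity),
      div_mul_eq_mul_div, div_le_iff₀ hp]
    gcongr
    exact le_max_left _ _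

/-- Elements killed by functions supported near `x`. -/
def localKer {X B : Type*} [TopologicalSpace X] [CompactSpace X] [T2Space X]
    [CStarAlgebra B] (ζ : C(X, ℂ) →⋆ₐ[ℂ] B) (x : X) : Submodule ℂ B where
  carrier := {d | ∃ U : Set X, IsOpen U ∧ x ∈ U ∧
    ∀ g : C(X, ℂ), (∀ y, y ∉ U → g y = 0) → ζ g * d = 0}
  zero_mem' := ⟨Set.univ, isOpen_univ, trivial, fun g _ => mul_zero _⟩
  add_mem' := by
    rintro a b ⟨U, hU, hxU, h⟩ ⟨V, hV, hxV, h'⟩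
    refine ⟨U ∩ V, hU.inter hV, ⟨hxU, hxV⟩, fun g hg => ?_⟩
    rw [mul_add, h g fun y hy => hg y fun hh => hy hh.1,
      h' g fun y hy => hg y fun hh => hy hh.2, add_zero]
  smul_mem' := by
    rintro c a ⟨U, hU, hxU, h⟩
    refine ⟨U, hU, hxU, fun g hg => ?_⟩
    rw [mul_smul_comm, h g hg, smul_zero]

theorem fiberIdeal_approx {X B : Type*} [TopologicalSpace X] [CompactSpace X] [T2Space X]
    [CStarAlgebra B] (ζ : C(X, ℂ) →⋆ₐ[ℂ] B) (x : X) (d : B) (hd : d ∈ fiberIdeal ζ x)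
    (ε : ℝ) (hε : 0 < ε) : ∃ (U : Set X) (r : B), IsOpen U ∧ x ∈ U ∧ ‖r‖ ≤ ε ∧
      ∀ g : C(X, ℂ), (∀ y, y ∉ U → g y = 0) → ζ g * d = ζ g * r := by
  have hcl : d ∈ closure (localKer ζ x : Set B) := by
    refine closure_minimal ?_ isClosed_closure hd
    rw [← Submodule.topologicalClosure_coe, SetLike.coe_subset_coe, Submodule.span_le]
    rintro y ⟨f, a, hf, rfl⟩
    rw [Submodule.topologicalClosure_coe, Metric.mem_closure_iff]
    intro η hη
    set δ := η / (2 * (‖a‖ + 1)) with hδd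
    have hδ : 0 < δ := by positivity
    obtain ⟨k, hk0, hk⟩ := trunc_exists δ hδ
    refine ⟨ζ (k.comp f) * a, ⟨{y | ‖f y‖ < δ}, ?_, ?_, ?_⟩, ?_⟩
    · exact isOpen_lt (by fun_prop) continuous_const
    · simpa [hf] using hδ
    · intro g hg
      have : g * k.comp f = 0 := by
        ext y
        by_cases hy : ‖f y‖ < δ
        · simp [hk0 _ hy]
        · simp [hg y hy]
      rw [← mul_assoc, ← map_mul, this, map_zero, zero_mul]
    · rw [dist_eq_norm, ← sub_mul, ← map_sub]
      have h1 : ‖ζ (f - k.comp f)‖ ≤ δ :=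
        (NonUnitalStarAlgHom.norm_apply_le ζ _).trans
          ((ContinuousMap.norm_le _ hδ.le).2 fun y => hk (f y))
      have h2 : δ * (‖a‖ + 1) = η / 2 := by
        rw [hδd]; field_simp
      calc _ ≤ ‖ζ (f - k.comp f)‖ * ‖a‖ := norm_mul_le _ _
        _ ≤ δ * ‖a‖ := by gcongr
        _ < η := by nlinarith
  obtain ⟨v, ⟨U, hU, hx, h⟩, hv⟩ := Metric.mem_closure_iff.1 hcl ε hε
  refine ⟨U, d - v, hU, hx, ?_, fun g hg => ?_⟩
  · rw [← dist_eq_norm]; exact hv.le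
  · rw [mul_sub, h g hg, sub_zero]

theorem stmt9_aux {X A B : Type*} [TopologicalSpace X] [CompactSpace X] [T2Space X]
    [CStarAlgebra A] [CStarAlgebra B]
    (ζA : C(X, ℂ) →⋆ₐ[ℂ] A) (ζB : C(X, ℂ) →⋆ₐ[ℂ] B)
    (hζB : ∀ (f : C(X, ℂ)) (b : B), ζB f * b = b * ζB f)
    (φ : A →⋆ₐ[ℂ] B) (hφ : ∀ f : C(X, ℂ), φ (ζA f) = ζB f)
    (H : ∀ (x : X) (b : B), ∃ a : A, b - φ a ∈ fiberIdeal ζB x) :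
    Function.Surjective φ := by
  apply surj_of_dense
  intro b
  rw [Metric.mem_closure_iff]
  intro η hη
  set ε := η / (12 * (1 + ‖(1 : B)‖)) with hεd
  have hε : 0 < ε := by positivity
  choose a ha using fun x => H x b
  choose U r hU hxU hr hUr using fun x => fiberIdeal_approx ζB x _ (ha x) ε hε
  obtain ⟨t, ht⟩ := isCompact_univ.elim_finite_subcover U hU
    (fun x _ => Set.mem_iUnion.2 ⟨x, hxU x⟩)
  obtain ⟨p, hp⟩ := PartitionOfUnity.exists_isSubordinate isClosed_univ
    (fun i : t => U i) (fun i => hU i) (fun x hx => by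
      obtain ⟨i, hi, hxi⟩ := Set.mem_iUnion₂.1 (ht hx)
      exact Set.mem_iUnion.2 ⟨⟨i, hi⟩, hxi⟩)
  let q : t → C(X, ℂ) := fun i => ⟨fun x => ((Real.sqrt (p i x) : ℝ) : ℂ), by fun_prop⟩
  let g : t → C(X, ℂ) := fun i => star (q i) * q i
  have hgx : ∀ i x, g i x = ((p i x : ℝ) : ℂ) := by
    intro i x
    have : Real.sqrt (p i x) * Real.sqrt (p i x) = p i x := Real.mul_self_sqrt (p.nonneg i x)
    simp only [g, q, ContinuousMap.mul_apply, ContinuousMap.star_apply, ContinuousMap.coe_mk,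
      Complex.star_def, Complex.conj_ofReal]
    rw [← Complex.ofReal_mul, this]
  have hgB : ∀ i, ζB (g i) = star (ζB (q i)) * ζB (q i) := by
    intro i
    rw [← map_star ζB (q i), ← map_mul]
  have hsum : ∑ i, g i = 1 := by
    ext x
    have := p.sum_eq_one (Set.mem_univ x)
    rw [finsum_eq_sum_of_fintype] at this
    rw [ContinuousMap.sum_apply]
    simp only [hgx, ContinuousMap.one_apply]
    exact_mod_cast this
  have hgU : ∀ i : t, ∀ y, y ∉ U i → g i y = 0 := by
    intro i y hy
    rw [hgx]
    have : p i y = 0 := by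
      by_contra h
      exact hy (hp i (subset_tsupport _ h))
    simp [this]
  refine ⟨φ (∑ i, ζA (g i) * a i), ⟨_, rfl⟩, ?_⟩
  have e : b - φ (∑ i, ζA (g i) * a i) = ∑ i, star (ζB (q i)) * r i * ζB (q i) := by
    have hb : b = ∑ i, ζB (g i) * b := by
      rw [← Finset.sum_mul, ← map_sum, hsum, map_one, one_mul]
    conv_lhs => rw [hb]
    rw [map_sum, ← Finset.sum_sub_distrib]
    refine Finset.sum_congr rfl fun i _ => ?_
    rw [map_mul φ, hφ, ← mul_sub, hUr i (g i) (hgU i), hgB, mul_assoc, hζB, ← mul_assoc]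
  rw [dist_eq_norm, e]
  refine (sum_bound Finset.univ (fun i => ζB (q i)) (fun i => r i) ?_ ε hε.le
    (fun i _ => hr i)).trans_lt ?_
  · have : ∑ i, ζB (g i) = 1 := by rw [← map_sum, hsum, map_one]
    simpa only [hgB] using this
  · have : ε * (1 + ‖(1 : B)‖) = η / 12 := by
      rw [hεd]; field_simp
    nlinarith

/-- Let `X` be a compact Hausdorff space, `A`, `B` unital C*-algebras,
`ζ_A : C(X) → A`, `ζ_B : C(X) → B` unital *-homomorphisms with central ranges, and
`φ : A → B` a unital *-homomorphism with `φ ∘ ζ_A = ζ_B`.  Then `φ` is surjective iff all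
the induced fiber maps `A/J_x(A) → B/J_x(B)` are surjective, i.e. iff for every `x` and
`b` there is `a` with `b − φ a ∈ J_x(B)`. -/
theorem stmt9 {X A B : Type*} [TopologicalSpace X] [CompactSpace X] [T2Space X]
    [NormedRing A] [StarRing A] [CStarRing A] [NormedAlgebra ℂ A]
    [CompleteSpace A] [StarModule ℂ A]
    [NormedRing B] [StarRing B] [CStarRing B] [NormedAlgebra ℂ B]
    [CompleteSpace B] [StarModule ℂ B]
    (ζA : C(X, ℂ) →⋆ₐ[ℂ] A) (ζB : C(X, ℂ) →⋆ₐ[ℂ] B)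
    (hζA : ∀ (f : C(X, ℂ)) (a : A), ζA f * a = a * ζA f)
    (hζB : ∀ (f : C(X, ℂ)) (b : B), ζB f * b = b * ζB f)
    (φ : A →⋆ₐ[ℂ] B) (hφ : ∀ f : C(X, ℂ), φ (ζA f) = ζB f) :
    Function.Surjective φ ↔
      ∀ (x : X) (b : B), ∃ a : A, b - φ a ∈ fiberIdeal ζB x := by
  letI : CStarAlgebra A := {}
  letI : CStarAlgebra B := {}
  constructor
  · intro h x b
    obtain ⟨a, rfl⟩ := h b
    refine ⟨a, subset_closure ?_⟩
    rw [sub_self]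
    exact Submodule.zero_mem _
  · exact stmt9_aux ζA ζB hζB φ hφ
end

section
/- Under the relations (R1)–(R4) one has s² = 0. -/
/-- Under the relations (R1)–(R4) of the dimension drop algebra
`I_{n,n+1}` (index `⟨0, hn⟩` playing the role of the index `1` of the paper) one has
`s² = 0`. -/
theorem stmt11 {B : Type*} [NormedRing B] [StarRing B] [CStarRing B]
    [NormedAlgebra ℂ B] [CompleteSpace B] [StarModule ℂ B]
    (n : ℕ) (hn : 1 ≤ n) (s : B) (f : Fin n → Fin n → B)
    (hs : ‖s‖ ≤ 1) (hf : ∀ j k, ‖f j k‖ ≤ 1)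
    (R1 : ∀ j k, star (f j k) = f k j)
    (R2 : ∀ j k l m, f j k * f l m = if k = l then f j j * f j m else 0)
    (R3 : f ⟨0, hn⟩ ⟨0, hn⟩ * s = s)
    (R4 : ∑ j, f j j + star s * s = 1) :
    s * s = 0 := by
  have h0 : ∀ j, j ≠ ⟨0, hn⟩ → f j j * s = 0 := by
    intro j hj
    rw [← R3, ← mul_assoc, R2, if_neg hj, zero_mul]
  have h1 : (∑ j, f j j) * s = s := by
    rw [Finset.sum_mul, Finset.sum_eq_single ⟨0, hn⟩ (fun j _ hj => h0 j hj)
      (fun h => absurd (Finset.mem_univ _) h), R3]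
  have h2 : star s * s * s = 0 := by
    have h := congrArg (· * s) R4
    simp only [add_mul, h1, one_mul] at h
    exact left_eq_add.mp h.symm
  rw [← CStarRing.star_mul_self_eq_zero_iff, star_mul, mul_assoc, ← mul_assoc (star s) s s,
    h2, mul_zero]
end

section
/- Under the relations (R1)–(R4), the element b = s* s + ∑_{j=1}^n f_{j,1} s s* f_{1,j} is a positive element of norm at most 1 which commutes with s and with every f_{j,k} (1 ≤ j, k ≤ n); moreover s b = b s = s s* s. -/
/-- Under the relations (R1)–(R4) of the dimension drop algebra
`I_{n,n+1}` (index `⟨0, hn⟩` playing the role of the index `1` of the paper), the element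
`b = s* s + ∑ⱼ f_{j,1} s s* f_{1,j}` is a positive element of norm at most `1` which
commutes with `s` and with every `f j k`; moreover `s b = b s = s s* s`. -/
theorem stmt12 {B : Type*} [NormedRing B] [StarRing B] [CStarRing B]
    [NormedAlgebra ℂ B] [CompleteSpace B] [StarModule ℂ B]
    (n : ℕ) (hn : 1 ≤ n) (s : B) (f : Fin n → Fin n → B)
    (hs : ‖s‖ ≤ 1) (hf : ∀ j k, ‖f j k‖ ≤ 1)
    (R1 : ∀ j k, star (f j k) = f k j)
    (R2 : ∀ j k l m, f j k * f l m = if k = l then f j j * f j m else 0)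
    (R3 : f ⟨0, hn⟩ ⟨0, hn⟩ * s = s)
    (R4 : ∑ j, f j j + star s * s = 1)
    (b : B) (hb : b = star s * s + ∑ j, f j ⟨0, hn⟩ * s * star s * f ⟨0, hn⟩ j) :
    (∃ c : B, b = star c * c) ∧ ‖b‖ ≤ 1 ∧
      (b * s = s * b) ∧ (∀ j k, b * f j k = f j k * b) ∧
      s * b = s * star s * s ∧ b * s = s * star s * s := by
  let _ : CStarAlgebra B := {}
  let _ : PartialOrder B := CStarAlgebra.spectralOrder B
  have : StarOrderedRing B := CStarAlgebra.spectralOrderedRing B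
  generalize hz : (⟨0, hn⟩ : Fin n) = z at *
  have hfs : ∀ l k, k ≠ z → f l k * s = 0 := by
    intro l k hk
    rw [← R3, ← mul_assoc, R2, if_neg hk, zero_mul]
  have hR3' : star s * f z z = star s := by
    have := congrArg star R3
    rwa [star_mul, R1] at this
  have ha : star s * s = 1 - ∑ j, f j j := by rw [← R4]; abel
  have hl : ∀ j k, (∑ l, f l l) * f j k = f j j * f j k := by
    intro j k
    rw [Finset.sum_mul, Finset.sum_eq_single j]
    · intro l _ hlj
      rw [R2, if_neg hlj]
    · simp
  have hr : ∀ j k, f j k * (∑ l, f l l) = f j j * f j k := by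
    intro j k
    rw [Finset.mul_sum, Finset.sum_eq_single k]
    · rw [R2, if_pos rfl]
    · intro l _ hlj
      rw [R2, if_neg (Ne.symm hlj)]
    · simp
  have hac : ∀ j k, star s * s * f j k = f j k * (star s * s) := by
    intro j k
    rw [ha, sub_mul, mul_sub, hl, hr, one_mul, mul_one]
  have hass : star s * s * s = 0 := by
    rw [ha, sub_mul, Finset.sum_mul, Finset.sum_eq_single z, R3, one_mul, sub_self]
    · intro l _ h
      exact hfs l l h
    · simp
  have hsfs : ∀ l, s * f l z * s = 0 := by
    intro l
    have h : star s * s * f l z * s = 0 := by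
      rw [hac, mul_assoc, hass, mul_zero]
    rw [← CStarRing.star_mul_self_eq_zero_iff]
    calc star (s * f l z * s) * (s * f l z * s)
        = star s * star (f l z) * (star s * s * f l z * s) := by
          simp only [star_mul, mul_assoc]
      _ = 0 := by rw [h, mul_zero]
  have hbs : b * s = s * star s * s := by
    rw [hb, add_mul, hass, zero_add, Finset.sum_mul, Finset.sum_eq_single z]
    · rw [mul_assoc _ _ s, R3]
    · intro l _ h
      by_cases hh : l = z
      · exact absurd hh h
      · rw [mul_assoc _ _ s, hfs _ _ h, mul_zero]
    · simp
  have hsb : s * b = s * star s * s := by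
    rw [hb, mul_add, Finset.mul_sum, Finset.sum_eq_zero, add_zero, mul_assoc]
    intro l _
    calc s * (f l z * s * star s * f z l) = s * f l z * s * (star s * f z l) := by
          simp only [mul_assoc]
      _ = 0 := by rw [hsfs, zero_mul]
  have hbf : ∀ j k, b * f j k = f j k * b := by
    intro j k
    rw [hb, add_mul, mul_add, hac]
    congr 1
    rw [Finset.sum_mul, Finset.mul_sum, Finset.sum_eq_single j, Finset.sum_eq_single k]
    · have e1 : f j k * f k z = f j z * f z z := by
        rw [R2 j k k z, R2 j z z z, if_pos rfl, if_pos rfl]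
      have e2 : f z j * f j k = f z z * f z k := by
        rw [R2, if_pos rfl]
      calc f j z * s * star s * f z j * f j k
          = f j z * s * star s * (f z j * f j k) := by simp only [mul_assoc]
        _ = f j z * s * (star s * f z z) * f z k := by rw [e2]; simp only [mul_assoc]
        _ = f j z * (f z z * s) * star s * f z k := by rw [hR3', R3]
        _ = (f j z * f z z) * s * star s * f z k := by simp only [mul_assoc]
        _ = f j k * (f k z * s * star s * f z k) := by rw [← e1]; simp only [mul_assoc]
    · intro l _ h
      simp only [← mul_assoc]
      rw [R2, if_neg (Ne.symm h)]
      simp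
    · simp
    · intro l _ h
      rw [mul_assoc, R2, if_neg h, mul_zero]
    · simp
  have hb0 : 0 ≤ b := by
    rw [hb]
    refine add_nonneg (star_mul_self_nonneg s) (Finset.sum_nonneg fun l _ => ?_)
    have : f l z * s * star s * f z l = (f l z * s) * star (f l z * s) := by
      rw [star_mul, R1]; simp only [mul_assoc]
    rw [this]
    exact mul_star_self_nonneg _
  have hss : 0 ≤ 1 - s * star s := by
    rw [sub_nonneg, ← CStarAlgebra.norm_le_one_iff_of_nonneg _ (mul_star_self_nonneg s),
      CStarRing.norm_self_mul_star]
    exact mul_le_one₀ hs (norm_nonneg _) hs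
  have hb1 : b ≤ 1 := by
    have key : 1 - b = ∑ l, f l z * (1 - s * star s) * f z l
        + star s * (1 - s * star s) * s := by
      have h2 : ∑ l, f l z * f z l = (1 - star s * s) * (1 - star s * s) := by
        have : 1 - star s * s = ∑ l, f l l := by rw [ha]; abel
        rw [this, Finset.mul_sum]
        refine Finset.sum_congr rfl fun l _ => ?_
        rw [hl, R2, if_pos rfl]
      have h3 : ∑ l, f l z * (1 - s * star s) * f z l
          = ∑ l, f l z * f z l - ∑ l, f l z * s * star s * f z l := by
        rw [← Finset.sum_sub_distrib]
        refine Finset.sum_congr rfl fun l _ => ?_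
        noncomm_ring
      rw [h3, h2, hb]
      noncomm_ring
    rw [← sub_nonneg, key]
    refine add_nonneg (Finset.sum_nonneg fun l _ => ?_) (star_left_conjugate_nonneg hss s)
    have := star_right_conjugate_nonneg hss (f l z)
    rwa [R1] at this
  refine ⟨CStarAlgebra.nonneg_iff_eq_star_mul_self.mp hb0,
    (CStarAlgebra.norm_le_one_iff_of_nonneg b hb0).mpr hb1, hbs.trans hsb.symm, hbf, hsb, hbs⟩
end

section
/- Assume the relations (R1)–(R4) and suppose in addition that b = t·1 for some real number t. Then s f_{1,1}² s* = (1 − t) · s f_{1,1} s*. -/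
/-- Under the relations (R1)–(R4) of the dimension drop algebra
`I_{n,n+1}` (index `⟨0, hn⟩` playing the role of the index `1` of the paper), if moreover
`b = s* s + ∑ⱼ f_{j,1} s s* f_{1,j}` equals `t·1` for a real number `t`, then
`s f_{1,1}² s* = (1 − t) · s f_{1,1} s*`. -/
theorem stmt13 {B : Type*} [NormedRing B] [StarRing B] [CStarRing B]
    [NormedAlgebra ℂ B] [CompleteSpace B] [StarModule ℂ B]
    (n : ℕ) (hn : 1 ≤ n) (s : B) (f : Fin n → Fin n → B)
    (hs : ‖s‖ ≤ 1) (hf : ∀ j k, ‖f j k‖ ≤ 1)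
    (R1 : ∀ j k, star (f j k) = f k j)
    (R2 : ∀ j k l m, f j k * f l m = if k = l then f j j * f j m else 0)
    (R3 : f ⟨0, hn⟩ ⟨0, hn⟩ * s = s)
    (R4 : ∑ j, f j j + star s * s = 1)
    (t : ℝ)
    (hb : star s * s + ∑ j, f j ⟨0, hn⟩ * s * star s * f ⟨0, hn⟩ j = (t : ℂ) • 1) :
    s * (f ⟨0, hn⟩ ⟨0, hn⟩ * f ⟨0, hn⟩ ⟨0, hn⟩) * star s
      = ((1 - t : ℝ) : ℂ) • (s * f ⟨0, hn⟩ ⟨0, hn⟩ * star s) := by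
  set o : Fin n := ⟨0, hn⟩ with ho
  have R3' : star s * f o o = star s := by
    have := congrArg star R3
    rwa [star_mul, R1] at this
  -- multiply (R4) by `f o o` on the left
  have h4 : f o o * f o o + f o o * (star s * s) = f o o := by
    have h := congrArg (fun x => f o o * x) R4
    simp only [mul_add, Finset.mul_sum, mul_one] at h
    rw [Finset.sum_eq_single o] at h
    · exact h
    · intro j _ hj
      rw [R2, if_neg (Ne.symm hj)]
    · intro h; exact absurd (Finset.mem_univ _) h
  have h4' : f o o * f o o + star s * s * f o o = f o o := by
    have := congrArg star h4
    simpa only [star_add, star_mul, star_star, R1] using this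
  -- multiply the formula for `b` by `f o o` on the left
  have h5 : f o o * (star s * s) + s * star s = (t : ℂ) • f o o := by
    have h := congrArg (fun x => f o o * x) hb
    simp only [mul_add, Finset.mul_sum, mul_smul_comm, mul_one] at h
    rw [Finset.sum_eq_single o] at h
    · rw [R3, mul_assoc s, R3', ← mul_assoc (f o o) s, R3] at h
      exact h
    · intro j _ hj
      have : f o o * f j o = 0 := by rw [R2, if_neg (Ne.symm hj)]
      simp only [← mul_assoc, this, zero_mul]
    · intro h; exact absurd (Finset.mem_univ _) h
  have h6 : star s * s * s = 0 := by
    have h := congrArg (fun x => x * s) h4'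
    simp only [add_mul] at h
    rw [mul_assoc (f o o), R3, R3, mul_assoc (star s * s), R3] at h
    simpa using h
  have h7 : s * s = 0 := by
    rw [← CStarRing.star_mul_self_eq_zero_iff, star_mul, mul_assoc, ← mul_assoc (star s) s s, h6,
      mul_zero]
  have h8 : f o o * f o o = ((1 - t : ℝ) : ℂ) • f o o + s * star s := by
    have e1 : f o o * f o o = f o o - f o o * (star s * s) := eq_sub_of_add_eq h4
    have e2 : f o o * (star s * s) = (t : ℂ) • f o o - s * star s := eq_sub_of_add_eq h5
    rw [e1, e2]
    push_cast
    rw [sub_smul, one_smul]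
    abel
  rw [h8, mul_add, add_mul, ← mul_assoc s s, h7]
  simp
end

section
/- Assume the relations (R1)–(R4) and suppose in addition that b = 1. Then s s* = f_{1,1}; both s* s and s s* are projections and (s* s)(s s*) = 0; each f_{j,j} is a projection; and f_{j,k} f_{l,m} = δ_{k,l} f_{j,m} for all 1 ≤ j, k, l, m ≤ n. -/
/-- Under the relations (R1)–(R4) of the dimension drop algebra
`I_{n,n+1}` (index `⟨0, hn⟩` playing the role of the index `1` of the paper), if moreover
`b = s* s + ∑ⱼ f_{j,1} s s* f_{1,j} = 1`, then `s s* = f_{1,1}`; both `s* s` and `s s*`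
are projections with `(s* s)(s s*) = 0`; each `f j j` is a projection; and the `f j k`
satisfy the matrix unit relations. -/
theorem stmt15 {B : Type*} [NormedRing B] [StarRing B] [CStarRing B]
    [NormedAlgebra ℂ B] [CompleteSpace B] [StarModule ℂ B]
    (n : ℕ) (hn : 1 ≤ n) (s : B) (f : Fin n → Fin n → B)
    (hs : ‖s‖ ≤ 1) (hf : ∀ j k, ‖f j k‖ ≤ 1)
    (R1 : ∀ j k, star (f j k) = f k j)
    (R2 : ∀ j k l m, f j k * f l m = if k = l then f j j * f j m else 0)
    (R3 : f ⟨0, hn⟩ ⟨0, hn⟩ * s = s)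
    (R4 : ∑ j, f j j + star s * s = 1)
    (hb : star s * s + ∑ j, f j ⟨0, hn⟩ * s * star s * f ⟨0, hn⟩ j = 1) :
    s * star s = f ⟨0, hn⟩ ⟨0, hn⟩ ∧
      (star (star s * s) = star s * s ∧ (star s * s) * (star s * s) = star s * s) ∧
      (star (s * star s) = s * star s ∧ (s * star s) * (s * star s) = s * star s) ∧
      (star s * s) * (s * star s) = 0 ∧
      (∀ j, star (f j j) = f j j ∧ f j j * f j j = f j j) ∧
      (∀ j k l m, f j k * f l m = if k = l then f j m else 0) := by
  have hproj : ∀ a : B, star a = a → a * a * a = a * a → a * a = a := by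
    intro a ha h
    have h0 : star (a * a - a) * (a * a - a) = 0 := by
      have h4 : a * a * (a * a) = a * a := by rw [← mul_assoc, h, h]
      have h3 : a * (a * a) = a * a := by rw [← mul_assoc, h]
      rw [star_sub, star_mul, ha, sub_mul, mul_sub, mul_sub, h4, h3, h]
      simp
    exact sub_eq_zero.mp ((CStarRing.star_mul_self_eq_zero_iff _).mp h0)
  set o : Fin n := ⟨0, hn⟩ with ho
  have R3' : star s * f o o = star s := by
    have := congrArg star R3
    rwa [star_mul, R1] at this
  have hsum : ∑ j, f j j = ∑ j, f j o * s * star s * f o j := by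
    have h1 := R4.trans hb.symm
    rw [add_comm] at h1
    exact add_left_cancel h1
  have hleft : ∀ k, f k k * ∑ j, f j j = f k k * f k k := by
    intro k
    rw [Finset.mul_sum, Finset.sum_eq_single k]
    · intro j _ hj
      rw [R2, if_neg (Ne.symm hj)]
    · simp
  have hright : ∀ k, (∑ j, f j j) * f k k = f k k * f k k := by
    intro k
    rw [Finset.sum_mul, Finset.sum_eq_single k]
    · intro j _ hj
      rw [R2, if_neg hj]
    · simp
  have hee : f o o * f o o = s * star s := by
    rw [← hleft o, hsum, Finset.mul_sum, Finset.sum_eq_single o]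
    · rw [R3, mul_assoc s, R3', ← mul_assoc, R3]
    · intro j _ hj
      simp only [← mul_assoc]
      rw [R2 o o j o, if_neg (Ne.symm hj)]
      simp
    · simp
  have he : f o o * f o o = f o o := by
    apply hproj _ (R1 _ _)
    rw [hee, mul_assoc, R3']
  have hss : s * star s = f o o := by rw [← hee, he]
  have hp : star s * s * (star s * s) = star s * s := by
    rw [mul_assoc, ← mul_assoc s, hss, R3]
  have hq : ∑ j, f j j = 1 - star s * s := eq_sub_of_add_eq R4
  have hqq : (∑ j, f j j) * (∑ j, f j j) = ∑ j, f j j := by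
    rw [hq, sub_mul, one_mul, mul_sub, hp]
    simp
  have hid : ∀ j, f j j * f j j = f j j := by
    intro k
    apply hproj _ (R1 _ _)
    have h1 : f k k * ((∑ j, f j j) * (∑ j, f j j)) = f k k * (∑ j, f j j) := by rw [hqq]
    rw [← mul_assoc, hleft, mul_assoc, hleft, ← mul_assoc] at h1
    exact h1
  have hmu : ∀ j m, f j j * f j m = f j m := by
    intro j m
    have h2 : f j m * f m j = f j j := by
      rw [R2, if_pos rfl, hid]
    have h0 : (f j j * f j m - f j m) * star (f j j * f j m - f j m) = 0 := by
      have e1 : f j j * f j m - f j m = (f j j - 1) * f j m := by rw [sub_mul, one_mul]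
      rw [e1, star_mul, R1, mul_assoc, ← mul_assoc (f j m), h2, ← mul_assoc, sub_mul, hid]
      simp
    exact sub_eq_zero.mp ((CStarRing.mul_star_self_eq_zero_iff _).mp h0)
  refine ⟨hss, ⟨by simp, hp⟩, ⟨by simp, by rw [hss, he]⟩, ?_, fun j => ⟨R1 j j, hid j⟩, ?_⟩
  · have h1 := hright o
    rw [hq, sub_mul, one_mul, he] at h1
    rw [hss]
    exact sub_eq_self.mp h1
  · intro j k l m
    rw [R2, hmu]
end

section
/- Assume the relations (R1)–(R4) and suppose in addition that b = 1. Define e_k = f_{1,k} for 1 ≤ k ≤ n and e_{n+1} = s. Then: e_1 is a projection; e_k e_j = 0 for all 1 ≤ j ≤ n+1 whenever k ≠ 1; e_k e_j* = δ_{k,j} e_1 for all 1 ≤ j, k ≤ n+1; and ∑_{k=1}^{n+1} e_k* e_k = 1. (These are the universal generator relations for a unital copy of M_{n+1}(ℂ).) -/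
/-- Under the relations (R1)–(R4) of the dimension drop algebra
`I_{n,n+1}` (index `⟨0, hn⟩ : Fin n`, resp. `0 : Fin (n+1)`, playing the role of the
index `1` of the paper), if moreover `b = s* s + ∑ⱼ f_{j,1} s s* f_{1,j} = 1`, then the
family `e` with `e k = f_{1,k}` for `k ≤ n` and `e_{n+1} = s` satisfies the universal
generator relations of a unital copy of `M_{n+1}(ℂ)`. -/
theorem stmt16 {B : Type*} [NormedRing B] [StarRing B] [CStarRing B]
    [NormedAlgebra ℂ B] [CompleteSpace B] [StarModule ℂ B]
    (n : ℕ) (hn : 1 ≤ n) (s : B) (f : Fin n → Fin n → B)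
    (hs : ‖s‖ ≤ 1) (hf : ∀ j k, ‖f j k‖ ≤ 1)
    (R1 : ∀ j k, star (f j k) = f k j)
    (R2 : ∀ j k l m, f j k * f l m = if k = l then f j j * f j m else 0)
    (R3 : f ⟨0, hn⟩ ⟨0, hn⟩ * s = s)
    (R4 : ∑ j, f j j + star s * s = 1)
    (hb : star s * s + ∑ j, f j ⟨0, hn⟩ * s * star s * f ⟨0, hn⟩ j = 1)
    (e : Fin (n + 1) → B)
    (he : ∀ k : Fin n, e k.castSucc = f ⟨0, hn⟩ k)
    (heLast : e (Fin.last n) = s) :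
    (star (e 0) = e 0 ∧ e 0 * e 0 = e 0) ∧
      (∀ k j : Fin (n + 1), k ≠ 0 → e k * e j = 0) ∧
      (∀ k j : Fin (n + 1), e k * star (e j) = if k = j then e 0 else 0) ∧
      (∑ k, star (e k) * e k = 1) := by
  obtain ⟨z, hz⟩ : ∃ z : Fin n, z = ⟨0, hn⟩ := ⟨_, rfl⟩
  rw [← hz] at R3 hb he
  have he0 : e 0 = f z z := by
    rw [← he z, hz]; rfl
  have R3' : star s * f z z = star s := by
    have h := congrArg star R3
    rwa [star_mul, R1] at h
  have hsum : ∑ j, f j j = ∑ j, f j z * s * star s * f z j := by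
    have h := R4.trans hb.symm
    rw [add_comm] at h
    exact add_left_cancel h
  have hsq : f z z * f z z = s * star s := by
    have h := congrArg (fun x => f z z * x) hsum
    simp only [Finset.mul_sum] at h
    rw [Finset.sum_eq_single z, Finset.sum_eq_single z] at h
    · rw [h, R3, mul_assoc s, R3', ← mul_assoc, R3]
    · intro b _ hb'
      simp only [← mul_assoc]
      rw [R2, if_neg hb'.symm]; simp
    · simp
    · intro b _ hb'
      rw [R2, if_neg hb'.symm]
    · simp
  have hcube : f z z * (f z z * f z z) = f z z * f z z := by
    rw [hsq, ← mul_assoc, R3]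
  have hp : f z z * f z z = f z z := by
    rw [← sub_eq_zero, ← CStarRing.star_mul_self_eq_zero_iff]
    rw [star_sub, star_mul, R1]
    simp only [mul_sub, sub_mul, mul_assoc, hcube]
    simp
  have hss : s * star s = f z z := by rw [← hsq, hp]
  have hdiag : ∀ k, f z k * f k z = f z z := by
    intro k; rw [R2, if_pos rfl, hp]
  have hpl : ∀ k, f z z * f z k = f z k := by
    intro k
    rw [← sub_eq_zero, ← CStarRing.mul_star_self_eq_zero_iff]
    rw [star_sub, star_mul, R1, R1]
    have h1 : f z k * (f k z * f z z) = f z z := by rw [← mul_assoc, hdiag, hp]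
    simp only [mul_sub, sub_mul, mul_assoc, hdiag, h1, hp]
    simp
  have hpr : ∀ k, f k z * f z z = f k z := by
    intro k
    have h := congrArg star (hpl k)
    rwa [star_mul, R1, R1] at h
  have hs2 : star s * s = 1 - ∑ j, f j j := by rw [← R4]; abel
  have hmul : ∀ a k, f a k * (star s * s) = f a k - f a k * f k k := by
    intro a k
    rw [hs2, mul_sub, mul_one, Finset.mul_sum, Finset.sum_eq_single k]
    · intro b _ hb'
      rw [R2, if_neg hb'.symm]
    · simp
  have hsp : ∀ x, x * (star s * s) = 0 → x * star s = 0 := by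
    intro x hx
    rw [← R3', ← hss, ← mul_assoc, ← mul_assoc, mul_assoc x, hx, zero_mul]
  have hA : ∀ k, f z k * star s = 0 := by
    intro k
    apply hsp
    rw [hmul, R2, if_pos rfl, hpl, sub_self]
  have hB : ∀ j, s * f z j = 0 := by
    intro j
    have h : f j z * star s = 0 := by
      apply hsp
      rw [hmul, hpr, sub_self]
    have h := congrArg star h
    rwa [star_mul, R1, star_star, star_zero] at h
  have hC : ∀ k, s * star (f z k) = 0 := by
    intro k
    have h := congrArg star (hA k)
    rwa [star_mul, star_star, star_zero] at h
  have hD : ∀ k, k ≠ z → f z k * s = 0 := by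
    intro k hk
    have h : f z k * (f z z * s) = 0 := by rw [← mul_assoc, R2, if_neg hk, zero_mul]
    rwa [R3] at h
  have hE : s * s = 0 := by
    have h : s * (f z z * s) = 0 := by rw [← mul_assoc, hB, zero_mul]
    rwa [R3] at h
  refine ⟨⟨?_, ?_⟩, ?_, ?_, ?_⟩
  · rw [he0, R1]
  · rw [he0, hp]
  · intro k j hk
    induction k using Fin.lastCases with
    | last =>
      induction j using Fin.lastCases with
      | last => rw [heLast, hE]
      | cast j => rw [heLast, he, hB]
    | cast k =>
      have hk' : k ≠ z := by
        rintro rfl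
        apply hk
        rw [hz]; rfl
      induction j using Fin.lastCases with
      | last => rw [heLast, he, hD k hk']
      | cast j => rw [he, he, R2, if_neg hk']
  · intro k j
    rw [he0]
    induction k using Fin.lastCases with
    | last =>
      induction j using Fin.lastCases with
      | last => rw [heLast, hss, if_pos rfl]
      | cast j => rw [heLast, he, hC, if_neg (Fin.castSucc_lt_last j).ne']
    | cast k =>
      induction j using Fin.lastCases with
      | last => rw [heLast, he, hA, if_neg (Fin.castSucc_lt_last k).ne]
      | cast j =>
        rw [he, he, R1, R2, hp]
        simp only [Fin.castSucc_inj]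
  · rw [Fin.sum_univ_castSucc, heLast, ← hb, add_comm]
    congr 1
    refine Finset.sum_congr rfl fun k _ => ?_
    rw [he, R1, mul_assoc (f k z) s, hss, hpr]
end

section
/- Assume the relations (R1)–(R4) and suppose in addition that b = t·1 for some real number t with 0 < t < 1. Define c_{j,k} = (t − t²)^{-1} · s f_{1,j} s* f_{1,k} and d_l = (t^{1/2}(1 − t))^{-1} · s f_{1,l} for 1 ≤ j, k, l ≤ n. Then for all indices: c_{j,k} c_{l,m}* = δ_{k,m} δ_{j,l} c_{1,1}; d_j d_k* = δ_{j,k} c_{1,1}; c_{j,k} d_l* = 0; and d_l c_{j,k}* = 0. In particular c_{1,1} is a projection. -/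
/-- Under the relations (R1)–(R4) of the dimension drop algebra
`I_{n,n+1}` (index `⟨0, hn⟩` playing the role of the index `1` of the paper), if moreover
`b = s* s + ∑ⱼ f_{j,1} s s* f_{1,j} = t·1` with `0 < t < 1`, then the elements
`c j k = (t − t²)⁻¹ s f_{1,j} s* f_{1,k}` and `d l = (√t (1 − t))⁻¹ s f_{1,l}` satisfy
`c_{j,k} c_{l,m}* = δ_{k,m} δ_{j,l} c_{1,1}`, `d_j d_k* = δ_{j,k} c_{1,1}`,
`c_{j,k} d_l* = 0`, `d_l c_{j,k}* = 0`; in particular `c_{1,1}` is a projection. -/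
theorem stmt17 {B : Type*} [NormedRing B] [StarRing B] [CStarRing B]
    [NormedAlgebra ℂ B] [CompleteSpace B] [StarModule ℂ B]
    (n : ℕ) (hn : 1 ≤ n) (s : B) (f : Fin n → Fin n → B)
    (hs : ‖s‖ ≤ 1) (hf : ∀ j k, ‖f j k‖ ≤ 1)
    (R1 : ∀ j k, star (f j k) = f k j)
    (R2 : ∀ j k l m, f j k * f l m = if k = l then f j j * f j m else 0)
    (R3 : f ⟨0, hn⟩ ⟨0, hn⟩ * s = s)
    (R4 : ∑ j, f j j + star s * s = 1)
    (t : ℝ) (ht0 : 0 < t) (ht1 : t < 1)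
    (hb : star s * s + ∑ j, f j ⟨0, hn⟩ * s * star s * f ⟨0, hn⟩ j = (t : ℂ) • 1)
    (c : Fin n → Fin n → B) (d : Fin n → B)
    (hc : ∀ j k, c j k = ((t - t ^ 2 : ℝ) : ℂ)⁻¹ • (s * f ⟨0, hn⟩ j * star s * f ⟨0, hn⟩ k))
    (hd : ∀ l, d l = ((Real.sqrt t * (1 - t) : ℝ) : ℂ)⁻¹ • (s * f ⟨0, hn⟩ l)) :
    (∀ j k l m, c j k * star (c l m) = if k = m ∧ j = l then c ⟨0, hn⟩ ⟨0, hn⟩ else 0) ∧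
      (∀ j k, d j * star (d k) = if j = k then c ⟨0, hn⟩ ⟨0, hn⟩ else 0) ∧
      (∀ j k l, c j k * star (d l) = 0) ∧
      (∀ j k l, d l * star (c j k) = 0) ∧
      (star (c ⟨0, hn⟩ ⟨0, hn⟩) = c ⟨0, hn⟩ ⟨0, hn⟩ ∧
        c ⟨0, hn⟩ ⟨0, hn⟩ * c ⟨0, hn⟩ ⟨0, hn⟩ = c ⟨0, hn⟩ ⟨0, hn⟩) := by
  generalize (⟨0, hn⟩ : Fin n) = z at *
  have hes : star s * f z z = star s := by
    have := congrArg star R3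
    rwa [star_mul, R1] at this
  -- f_{1k} s*s = f_{1k} - f_{11} f_{1k}
  have hfp : ∀ k, f z k * (star s * s) = f z k - f z z * f z k := by
    intro k
    have h := congrArg (fun x => f z k * x) R4
    have h2 : ∀ j, f z k * f j j = if k = j then f z z * f z j else 0 := fun j => R2 _ _ _ _
    simp only [mul_add, Finset.mul_sum, h2, Finset.sum_ite_eq, Finset.mem_univ, if_true,
      mul_one] at h
    exact eq_sub_of_add_eq' h
  have hq : s * star s = ((t : ℂ) - 1) • f z z + f z z * f z z := by
    have h := congrArg (fun x => f z z * x) hb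
    have h2 : ∀ j, f z z * (f j z * s * star s * f z j)
        = if z = j then s * star s else 0 := by
      intro j
      rw [← mul_assoc, ← mul_assoc, ← mul_assoc, R2]
      split_ifs with hj
      · subst hj
        rw [mul_assoc (f z z), R3, R3, mul_assoc, hes]
      · simp
    simp only [mul_add, Finset.mul_sum, h2, Finset.sum_ite_eq, Finset.mem_univ, if_true,
      mul_one, hfp, mul_smul_comm] at h
    rw [sub_smul, one_smul, ← h]
    abel
  have hpe : star s * s * f z z = f z z - f z z * f z z := by
    have h := congrArg star (hfp z)
    simpa [star_mul, R1] using h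
  have hsss : star s * (s * s) = 0 := by
    calc star s * (s * s) = star s * s * (f z z * s) := by rw [R3, mul_assoc]
      _ = (star s * s * f z z) * s := by simp only [mul_assoc]
      _ = 0 := by rw [hpe, sub_mul, mul_assoc, R3, R3, sub_self]
  have hss : s * s = 0 := by
    rw [← CStarRing.star_mul_self_eq_zero_iff, star_mul, mul_assoc, hsss, mul_zero]
  have hss' : star s * star s = 0 := by rw [← star_mul, hss, star_zero]
  have he2 : f z z * f z z = s * star s + (1 - (t : ℂ)) • f z z := by
    rw [hq]; module
  have k2 : s * (f z z * f z z) * star s = (1 - (t : ℂ)) • (s * f z z * star s) := by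
    rw [he2, mul_add, add_mul, ← mul_assoc, hss]
    simp
  have heq : f z z * (s * star s) = s * star s := by rw [← mul_assoc, R3]
  have k3 : s * (f z z * (f z z * f z z)) * star s
      = ((1 - (t : ℂ)) * (1 - (t : ℂ))) • (s * f z z * star s) := by
    rw [he2, mul_add, heq, mul_add, add_mul, ← mul_assoc s s, hss]
    simp only [mul_smul_comm, smul_mul_assoc, zero_mul, zero_add]
    rw [k2, smul_smul]
  have hff : ∀ j k, f z j * f k z = if j = k then f z z * f z z else 0 := fun j k => R2 _ _ _ _
  have ht0' : (t : ℂ) ≠ 0 := by exact_mod_cast ht0.ne'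
  have ht1' : (1 - (t : ℂ)) ≠ 0 := by
    have : (1 - t) ≠ 0 := by linarith
    exact_mod_cast this
  have hczz : c z z = ((t - t ^ 2 : ℝ) : ℂ)⁻¹ • (s * f z z * star s) := by
    rw [hc, mul_assoc _ (star s), hes]
  have hcs : ∀ l m, star (c l m) = ((t - t ^ 2 : ℝ) : ℂ)⁻¹ • (f m z * (s * (f l z * star s))) := by
    intro l m
    rw [hc, star_smul]
    simp only [star_mul, R1, star_star, star_inv₀, Complex.star_def, Complex.conj_ofReal]
  have hds : ∀ l, star (d l) = ((Real.sqrt t * (1 - t) : ℝ) : ℂ)⁻¹ • (f l z * star s) := by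
    intro l
    rw [hd, star_smul]
    simp only [star_mul, R1, star_inv₀, Complex.star_def, Complex.conj_ofReal]
  have H1 : ∀ j k l m, c j k * star (c l m) = if k = m ∧ j = l then c z z else 0 := by
    intro j k l m
    have h1 : (s * f z j * star s * f z k) * (f m z * (s * (f l z * star s)))
        = s * f z j * star s * (f z k * f m z) * (s * (f l z * star s)) := by
      simp only [mul_assoc]
    rw [hcs, hc, smul_mul_smul_comm, h1, hff]
    by_cases hkm : k = m
    · have h2 : s * f z j * star s * (f z z * f z z) * (s * (f l z * star s))
          = s * ((f z j * (star s * s)) * f l z) * star s := by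
        rw [mul_assoc _ (star s), ← mul_assoc (star s), hes, hes]
        simp only [mul_assoc]
      rw [if_pos hkm, h2, hfp, sub_mul, mul_assoc (f z z), hff]
      by_cases hjl : j = l
      · rw [if_pos hjl, if_pos ⟨hkm, hjl⟩, mul_sub, sub_mul, k2, k3, hczz, ← sub_smul, smul_smul]
        congr 1
        have : ((t - t ^ 2 : ℝ) : ℂ) = t * (1 - t) := by push_cast; ring
        rw [this]
        field_simp
        ring
      · simp [hjl]
    · simp [hkm]
  have H3 : ∀ j k l, c j k * star (d l) = 0 := by
    intro j k l
    have h1 : (s * f z j * star s * f z k) * (f l z * star s)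
        = s * f z j * (star s * (f z k * f l z) * star s) := by
      simp only [mul_assoc]
    rw [hds, hc, smul_mul_smul_comm, h1, hff]
    split_ifs
    · rw [← mul_assoc (star s), hes, hes, hss', mul_zero, smul_zero]
    · simp
  have hsa : star (c z z) = c z z := by
    rw [hcs, hczz, ← mul_assoc, R3, mul_assoc]
  refine ⟨H1, ?_, H3, ?_, hsa, ?_⟩
  · intro j k
    have h1 : (s * f z j) * (f k z * star s) = s * (f z j * f k z) * star s := by
      simp only [mul_assoc]
    rw [hds, hd, smul_mul_smul_comm, h1, hff]
    split_ifs
    · rw [k2, hczz, smul_smul]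
      congr 1
      have e1 : ((t - t ^ 2 : ℝ) : ℂ) = t * (1 - t) := by push_cast; ring
      have e2 : ((Real.sqrt t : ℝ) : ℂ) * (Real.sqrt t : ℝ) = t := by
        exact_mod_cast Real.mul_self_sqrt ht0.le
      rw [e1, ← mul_inv]
      have e3 : ((Real.sqrt t * (1 - t) : ℝ) : ℂ) * ((Real.sqrt t * (1 - t) : ℝ) : ℂ)
          = t * (1 - t) * (1 - t) := by
        push_cast
        linear_combination (1 - (t : ℂ)) ^ 2 * e2
      rw [e3]
      field_simp
    · simp
  · intro j k l
    have := congrArg star (H3 j k l)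
    simpa [star_mul] using this
  · have := H1 z z z z
    rw [hsa] at this
    simpa using this
end

section
/- Assume the relations (R1)–(R4) and suppose in addition that b = t·1 for some real number t with 0 < t < 1. Define c_{j,k} = (t − t²)^{-1} · s f_{1,j} s* f_{1,k} and d_l = (t^{1/2}(1 − t))^{-1} · s f_{1,l} for 1 ≤ j, k, l ≤ n. Then s = t^{1/2} ∑_{j=1}^n c_{j,1}* d_j, and f_{j,k} = ∑_{l=1}^n c_{l,j}* c_{l,k} + (1 − t) d_j* d_k for all 1 ≤ j, k ≤ n. -/
/-- Under the relations (R1)–(R4) of the dimension drop algebra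
`I_{n,n+1}` (index `⟨0, hn⟩` playing the role of the index `1` of the paper), if moreover
`b = s* s + ∑ⱼ f_{j,1} s s* f_{1,j} = t·1` with `0 < t < 1`, then with
`c j k = (t − t²)⁻¹ s f_{1,j} s* f_{1,k}` and `d l = (√t (1 − t))⁻¹ s f_{1,l}` one has
`s = √t ∑ⱼ c_{j,1}* d_j` and `f_{j,k} = ∑ₗ c_{l,j}* c_{l,k} + (1 − t) d_j* d_k`. -/
theorem stmt18 {B : Type*} [NormedRing B] [StarRing B] [CStarRing B]
    [NormedAlgebra ℂ B] [CompleteSpace B] [StarModule ℂ B]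
    (n : ℕ) (hn : 1 ≤ n) (s : B) (f : Fin n → Fin n → B)
    (hs : ‖s‖ ≤ 1) (hf : ∀ j k, ‖f j k‖ ≤ 1)
    (R1 : ∀ j k, star (f j k) = f k j)
    (R2 : ∀ j k l m, f j k * f l m = if k = l then f j j * f j m else 0)
    (R3 : f ⟨0, hn⟩ ⟨0, hn⟩ * s = s)
    (R4 : ∑ j, f j j + star s * s = 1)
    (t : ℝ) (ht0 : 0 < t) (ht1 : t < 1)
    (hb : star s * s + ∑ j, f j ⟨0, hn⟩ * s * star s * f ⟨0, hn⟩ j = (t : ℂ) • 1)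
    (c : Fin n → Fin n → B) (d : Fin n → B)
    (hc : ∀ j k, c j k = ((t - t ^ 2 : ℝ) : ℂ)⁻¹ • (s * f ⟨0, hn⟩ j * star s * f ⟨0, hn⟩ k))
    (hd : ∀ l, d l = ((Real.sqrt t * (1 - t) : ℝ) : ℂ)⁻¹ • (s * f ⟨0, hn⟩ l)) :
    s = ((Real.sqrt t : ℝ) : ℂ) • ∑ j, star (c j ⟨0, hn⟩) * d j ∧
      ∀ j k, f j k = ∑ l, star (c l j) * c l k
        + ((1 - t : ℝ) : ℂ) • (star (d j) * d k) := by
  generalize (⟨0, hn⟩ : Fin n) = o at *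
  have hT0 : (t : ℂ) ≠ 0 := by exact_mod_cast ht0.ne'
  have hT1 : (1 - t : ℂ) ≠ 0 := by
    have : (1 - t : ℝ) ≠ 0 := by linarith
    exact_mod_cast this
  have hrt : ((Real.sqrt t : ℝ) : ℂ) ≠ 0 := by
    exact_mod_cast (Real.sqrt_pos.mpr ht0).ne'
  have hrt2 : ((Real.sqrt t : ℝ) : ℂ) ^ 2 = t := by
    exact_mod_cast Real.sq_sqrt ht0.le
  have hcT : ((t - t ^ 2 : ℝ) : ℂ) = t * (1 - t) := by push_cast; ring
  have hdT : ((Real.sqrt t * (1 - t) : ℝ) : ℂ) = (Real.sqrt t : ℝ) * (1 - t) := by push_cast; rfl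
  have hs1 : ((1 - t : ℝ) : ℂ) = 1 - t := by push_cast; rfl
  have hcs : ∀ j k, star (c j k) = ((t - t ^ 2 : ℝ) : ℂ)⁻¹ • (f k o * s * f j o * star s) := by
    intro j k
    rw [hc]
    simp only [star_smul, star_mul, star_star, R1, mul_assoc, star_inv₀, Complex.star_def,
      Complex.conj_ofReal]
  have hds : ∀ l, star (d l) = ((Real.sqrt t * (1 - t) : ℝ) : ℂ)⁻¹ • (f l o * star s) := by
    intro j
    rw [hd]
    simp only [star_smul, star_mul, R1, star_inv₀, Complex.star_def,
      Complex.conj_ofReal]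
  rw [hcT] at hcs
  rw [hdT] at hds
  simp only [hcT] at hc
  simp only [hdT] at hd
  rw [hs1]
  clear hcT hdT hs1
  generalize ((Real.sqrt t : ℝ) : ℂ) = r at *
  generalize (t : ℂ) = T at *
  obtain ⟨a, ha⟩ : ∃ a, a = ∑ j, f j j := ⟨_, rfl⟩
  have Ha1 : ∀ j k, f j k * a = f j j * f j k := by
    intro j k
    rw [ha, Finset.mul_sum, Finset.sum_eq_single k, R2, if_pos rfl]
    · intro l _ hl
      rw [R2, if_neg (Ne.symm hl)]
    · simp
  have Ha2 : ∀ j k, a * f j k = f j j * f j k := by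
    intro j k
    rw [ha, Finset.sum_mul, Finset.sum_eq_single j]
    · intro l _ hl
      rw [R2, if_neg hl]
    · simp
  have Hc : ∀ j k, f j k * a = a * f j k := fun j k => by rw [Ha1, Ha2]
  have Hp : ∀ j k, f j o * f o k = a * f j k := fun j k => by rw [R2, if_pos rfl, Ha2]
  have hq : star s * s = 1 - a := by rw [ha, ← R4]; abel
  have E1 : ∀ k, s * star s * f o k = a * f o k - (1 - T) • f o k := by
    intro k
    have h := congrArg (fun x => f o k * x) hb
    simp only [mul_add, Finset.mul_sum, hq] at h
    rw [Finset.sum_eq_single k] at h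
    · have h2 : f o k * (f k o * s * star s * f o k) = s * star s * f o k := by
        have : f o k * f k o = f o o * f o o := by rw [R2, if_pos rfl]
        calc _ = (f o k * f k o) * s * star s * f o k := by simp only [mul_assoc]
          _ = f o o * (f o o * s) * star s * f o k := by rw [this]; simp only [mul_assoc]
          _ = _ := by rw [R3, R3]
      rw [h2, mul_sub, Hc, mul_smul_comm, mul_one] at h
      rw [sub_smul, one_smul, ← h]; abel
    · intro l _ hl
      have : f o k * f l o = 0 := by rw [R2, if_neg (Ne.symm hl)]
      simp only [← mul_assoc, this, zero_mul]
    · simp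
  have hsq : s * (star s * s) = T • s := by
    have h := congrArg (fun x => x * s) (E1 o)
    simp only [sub_mul, smul_mul_assoc, Ha2, mul_assoc, R3] at h
    rw [h, sub_smul, one_smul]; abel
  have hsa : s * a = (1 - T) • s := by
    rw [hq, mul_sub, mul_one] at hsq
    rw [sub_smul, one_smul, ← hsq]; abel
  have haa : a * a = (2 - T) • a - (1 - T) • (1 : B) := by
    have h := congrArg (fun x => star s * x) hsa
    simp only [← mul_assoc, hq, mul_smul_comm, sub_mul, one_mul] at h
    have : a * a = a - (1 - T) • (1 - a) := by rw [← h]; abel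
    rw [this]; module
  have K : ∑ j, s * f j o * star s * (s * f o j) = (T * (1 - T) ^ 2) • s := by
    have h1 : ∀ j, s * f j o * star s * (s * f o j) = s * (1 - a) * a * f j j := by
      intro j
      calc _ = s * (f j o * (star s * s)) * f o j := by simp only [mul_assoc]
        _ = s * ((1 - a) * f j o) * f o j := by rw [hq, mul_sub, Hc, sub_mul, mul_one, one_mul]
        _ = s * (1 - a) * (f j o * f o j) := by simp only [mul_assoc]
        _ = _ := by rw [Hp]; simp only [mul_assoc]
    simp only [h1]
    rw [← Finset.mul_sum, ← ha, ← hq, hsq]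
    simp only [smul_mul_assoc, hsa, smul_smul]
    congr 1; ring
  constructor
  · have h1 : ∀ j, star (c j o) * d j
        = ((T * (1 - T))⁻¹ * (r * (1 - T))⁻¹) • (s * f j o * star s * (s * f o j)) := by
      intro j
      rw [hcs, hd, smul_mul_smul_comm, R3]
    simp only [h1]
    rw [← Finset.smul_sum, K, smul_smul, smul_smul]
    have : r * ((T * (1 - T))⁻¹ * (r * (1 - T))⁻¹ * (T * (1 - T) ^ 2)) = 1 := by
      field_simp
    rw [← mul_assoc] at this
    rw [this, one_smul]
  · intro j k
    have h1 : ∀ l, star (c l j) * c l k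
        = ((T * (1 - T))⁻¹ * (T * (1 - T))⁻¹) •
          (f j o * (s * f l o * star s * (s * f o l)) * (star s * f o k)) := by
      intro l
      rw [hcs, hc, smul_mul_smul_comm]
      simp only [mul_assoc]
    have h2 : f j o * s * (star s * f o k) = a * a * f j k - (1 - T) • (a * f j k) := by
      calc _ = f j o * (s * star s * f o k) := by simp only [mul_assoc]
        _ = _ := by
          rw [E1, mul_sub, mul_smul_comm, Hp, ← mul_assoc, Hc, mul_assoc, Hp, mul_assoc]
    have h3 : f j o * star s * (s * f o k) = a * f j k - a * a * f j k := by
      calc _ = f j o * (star s * s) * f o k := by simp only [mul_assoc]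
        _ = _ := by
          rw [hq, mul_sub, mul_one, sub_mul, Hp, Hc, mul_assoc, Hp, mul_assoc]
    simp only [h1]
    rw [← Finset.smul_sum, ← Finset.sum_mul, ← Finset.mul_sum, K, mul_smul_comm, smul_mul_assoc,
      h2, hds, hd, smul_mul_smul_comm, h3, haa, sub_mul, smul_mul_assoc, smul_mul_assoc, one_mul]
    have hr : (r * (1 - T))⁻¹ * (r * (1 - T))⁻¹ = T⁻¹ * ((1 - T)⁻¹ * (1 - T)⁻¹) := by
      rw [← hrt2]; field_simp
    rw [hr]
    generalize a * f j k = x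
    match_scalars <;> field_simp <;> ring
end
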